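/- arXiv:2412.06467 — 5 statements merged into one kernel-verified Lean document; each statement's English description precedes it below -/
import Mathlib

section
/- Let I be an equigenerated squarefree monomial ideal in K[x_1,...,x_n], let x be a variable, and let s be a positive integer. If I^s has linear quotients, then (I^x)^s has linear quotients, where I^x is the duplicate ideal of I by x. -/
open MvPolynomial

/-- An ideal is generated by a subset of the variables. -/
def genByVars {K : Type*} [Field K] {σ : Type*} (J : Ideal (MvPolynomial σ K)) : Prop :=
  ∃ S : Set σ, J = Ideal.span ((fun i => (X i : MvPolynomial σ K)) '' S)

/-- An equigenerated monomial ideal has linear quotients: there is an ordering of a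
minimal monomial generating system (an antichain of exponent vectors) such that each
successive colon ideal is generated by variables. -/
def HasLinearQuotients {K : Type*} [Field K] {σ : Type*} (I : Ideal (MvPolynomial σ K)) : Prop :=
  ∃ (r : ℕ) (d : Fin r → (σ →₀ ℕ)),
    (∀ i j : Fin r, i ≠ j → ¬ d i ≤ d j) ∧
    Ideal.span (Set.range fun i => (monomial (d i) (1 : K))) = I ∧
    ∀ i : Fin r,
      genByVars (Submodule.colon
        (Ideal.span ((fun j => (monomial (d j) (1 : K))) '' {j | j < i}))
        (Ideal.span {(monomial (d i) (1 : K))}))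

section Helpers

open scoped Pointwise

lemma mono_mem_span {K : Type*} [Field K] {σ : Type*} (A : Set (σ →₀ ℕ)) (e : σ →₀ ℕ) :
    (monomial e (1 : K)) ∈ Ideal.span ((fun a => monomial a (1 : K)) '' A) ↔ ∃ a ∈ A, a ≤ e := by
  classical
  rw [mem_ideal_span_monomial_image]
  simp [support_monomial]

lemma mono_mem_colon {K : Type*} [Field K] {σ : Type*} (A : Set (σ →₀ ℕ)) (m : σ →₀ ℕ)
    (f : MvPolynomial σ K) :
    f ∈ Submodule.colon (Ideal.span ((fun a => monomial a (1 : K)) '' A))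
        (Ideal.span {(monomial m (1 : K))} : Ideal (MvPolynomial σ K)) ↔
      f * monomial m 1 ∈ Ideal.span ((fun a => monomial a (1 : K)) '' A) := by
  rw [Submodule.mem_colon]
  constructor
  · intro h
    exact h _ (Ideal.subset_span rfl)
  · intro h p hp
    obtain ⟨q, rfl⟩ := Ideal.mem_span_singleton'.1 hp
    have := Ideal.mul_mem_left _ q h
    rw [smul_eq_mul]
    convert this using 1
    ring

lemma genByVars_colon_fwd {K : Type*} [Field K] {σ : Type*} (A : Set (σ →₀ ℕ)) (m : σ →₀ ℕ)
    (h : genByVars (Submodule.colon (Ideal.span ((fun a => monomial a (1 : K)) '' A))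
        (Ideal.span {(monomial m (1 : K))} : Ideal (MvPolynomial σ K)))) :
    ∀ b ∈ A, ∃ c ∈ A, ∃ v, c ≤ m + Finsupp.single v 1 ∧ m v < b v := by
  classical
  intro b hb
  obtain ⟨S, hS⟩ := h
  have h1 : monomial (b - m) (1 : K) ∈ Ideal.span ((fun i => (X i : MvPolynomial σ K)) '' S) := by
    rw [← hS, mono_mem_colon, monomial_mul, mul_one, mono_mem_span]
    exact ⟨b, hb, le_tsub_add⟩
  rw [mem_ideal_span_X_image] at h1
  obtain ⟨v, hv, hv'⟩ := h1 (b - m) (by simp [support_monomial])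
  have h2 : (X v : MvPolynomial σ K) ∈ Ideal.span ((fun i => (X i : MvPolynomial σ K)) '' S) :=
    Ideal.subset_span ⟨v, hv, rfl⟩
  rw [← hS, mono_mem_colon, X, monomial_mul, mul_one, mono_mem_span] at h2
  obtain ⟨c, hc, hc'⟩ := h2
  refine ⟨c, hc, v, by rwa [add_comm], ?_⟩
  rw [Finsupp.tsub_apply] at hv'
  omega

lemma genByVars_colon_bwd {K : Type*} [Field K] {σ : Type*} (A : Set (σ →₀ ℕ)) (m : σ →₀ ℕ)
    (h : ∀ b ∈ A, ∃ c ∈ A, ∃ v, c ≤ m + Finsupp.single v 1 ∧ m v < b v) :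
    genByVars (Submodule.colon (Ideal.span ((fun a => monomial a (1 : K)) '' A))
        (Ideal.span {(monomial m (1 : K))} : Ideal (MvPolynomial σ K))) := by
  classical
  refine ⟨{v | ∃ c ∈ A, c ≤ m + Finsupp.single v 1}, le_antisymm ?_ ?_⟩
  · intro f hf
    rw [mono_mem_colon, mem_ideal_span_monomial_image] at hf
    rw [mem_ideal_span_X_image]
    intro e he
    obtain ⟨b, hb, hbe⟩ := hf (e + m) (by
      rw [mem_support_iff, coeff_mul_monomial, mul_one]
      exact mem_support_iff.1 he)
    obtain ⟨c, hc, v, hcv, hv⟩ := h b hb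
    refine ⟨v, ⟨c, hc, hcv⟩, ?_⟩
    have := hbe v
    rw [Finsupp.add_apply] at this
    omega
  · rw [Ideal.span_le]
    rintro _ ⟨v, ⟨c, hc, hcv⟩, rfl⟩
    rw [SetLike.mem_coe, mono_mem_colon]
    change monomial _ _ * _ ∈ _
    rw [monomial_mul, mul_one, mono_mem_span]
    exact ⟨c, hc, by rwa [add_comm]⟩

lemma hasLQ_of_key {K : Type*} [Field K] {τ : Type*} (F : Set (τ →₀ ℕ)) (hF : F.Finite)
    (key : (τ →₀ ℕ) → ℕ ×ₗ ℕ) (hinj : Set.InjOn key F)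
    (hanti : ∀ a ∈ F, ∀ b ∈ F, a ≤ b → a = b)
    (hc : ∀ a ∈ F, ∀ b ∈ F, key b < key a →
      ∃ c ∈ F, key c < key a ∧ ∃ v, c ≤ a + Finsupp.single v 1 ∧ a v < b v) :
    HasLinearQuotients (Ideal.span ((fun a => monomial a (1 : K)) '' F)) := by
  classical
  let T : Finset (ℕ ×ₗ ℕ) := hF.toFinset.image key
  let e := T.orderIsoOfFin rfl
  have hT : ∀ i, ∃ a ∈ F, key a = (e i : ℕ ×ₗ ℕ) := by
    intro i
    have := (e i).2
    obtain ⟨a, ha, hk⟩ := Finset.mem_image.1 this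
    exact ⟨a, hF.mem_toFinset.1 ha, hk⟩
  choose D hDF hDk using hT
  have hsurj : ∀ a ∈ F, ∃ i, D i = a := by
    intro a ha
    have hm : key a ∈ T := by
      simp only [T, Finset.mem_image, Set.Finite.mem_toFinset]
      exact ⟨a, ha, rfl⟩
    refine ⟨e.symm ⟨key a, hm⟩, hinj (hDF _) ha ?_⟩
    rw [hDk]; simp
  have hlt : ∀ i j, key (D i) < key (D j) ↔ i < j := by
    intro i j
    rw [hDk, hDk, Subtype.coe_lt_coe, e.lt_iff_lt]
  refine ⟨T.card, D, ?_, ?_, ?_⟩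
  · intro i j hij hle
    have := hanti _ (hDF i) _ (hDF j) hle
    apply hij
    apply e.injective
    apply Subtype.ext
    rw [← hDk, ← hDk, this]
  · congr 1
    ext f
    constructor
    · rintro ⟨i, rfl⟩
      exact ⟨D i, hDF i, rfl⟩
    · rintro ⟨a, ha, rfl⟩
      obtain ⟨i, rfl⟩ := hsurj a ha
      exact ⟨i, rfl⟩
  · intro i
    have := genByVars_colon_bwd (K := K) (D '' {j | j < i}) (D i) (by
      rintro _ ⟨j, hj, rfl⟩
      obtain ⟨c, hcF, hck, v, h1, h2⟩ := hc _ (hDF i) _ (hDF j) ((hlt j i).2 hj)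
      obtain ⟨k, rfl⟩ := hsurj c hcF
      exact ⟨D k, ⟨k, (hlt k i).1 hck, rfl⟩, v, h1, h2⟩)
    rwa [Set.image_image] at this

lemma span_pow_mono {K : Type*} [Field K] {σ : Type*} (A : Set (σ →₀ ℕ)) (s : ℕ) :
    (Ideal.span ((fun a => monomial a (1 : K)) '' A)) ^ s =
      Ideal.span ((fun a => monomial a (1 : K)) '' (s • A)) := by
  induction s with
  | zero =>
    rw [pow_zero, zero_nsmul]
    symm
    rw [Ideal.one_eq_top, Ideal.eq_top_iff_one]
    exact Ideal.subset_span ⟨0, rfl, rfl⟩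
  | succ n ih =>
    rw [pow_succ, ih, Ideal.span_mul_span', succ_nsmul]
    congr 1
    ext f
    simp only [Set.mem_mul, Set.mem_image, Set.mem_add]
    constructor
    · rintro ⟨_, ⟨a, ha, rfl⟩, _, ⟨b, hb, rfl⟩, rfl⟩
      exact ⟨a + b, ⟨a, ha, b, hb, rfl⟩, by rw [monomial_mul, mul_one]⟩
    · rintro ⟨_, ⟨a, ha, b, hb, rfl⟩, rfl⟩
      exact ⟨_, ⟨a, ha, rfl⟩, _, ⟨b, hb, rfl⟩, by rw [monomial_mul, mul_one]⟩

lemma lift_le {τ σ : Type*} (g : τ → σ) (W : τ →₀ ℕ) :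
    ∀ u : σ →₀ ℕ, u ≤ Finsupp.mapDomain g W → ∃ w ≤ W, Finsupp.mapDomain g w = u := by
  classical
  induction W using Finsupp.induction_linear with
  | zero =>
    intro u hu
    rw [Finsupp.mapDomain_zero] at hu
    exact ⟨0, le_rfl, by rw [Finsupp.mapDomain_zero]; exact (le_antisymm hu zero_le).symm⟩
  | add a b iha ihb =>
    intro u hu
    rw [Finsupp.mapDomain_add] at hu
    obtain ⟨w1, h1, e1⟩ := iha (u ⊓ Finsupp.mapDomain g a) inf_le_right
    obtain ⟨w2, h2, e2⟩ := ihb (u - u ⊓ Finsupp.mapDomain g a) (by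
      intro v
      have := hu v
      simp only [Finsupp.tsub_apply, Finsupp.inf_apply, Finsupp.add_apply] at *
      omega)
    refine ⟨w1 + w2, add_le_add h1 h2, ?_⟩
    rw [Finsupp.mapDomain_add, e1, e2]
    exact add_tsub_cancel_of_le inf_le_left
  | single v n =>
    intro u hu
    rw [Finsupp.mapDomain_single] at hu
    refine ⟨Finsupp.single v (u (g v)), ?_, ?_⟩
    · have := hu (g v)
      rw [Finsupp.single_eq_same] at this
      exact Finsupp.single_mono this
    · rw [Finsupp.mapDomain_single]
      ext z
      by_cases hz : g v = z
      · subst hz; simp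
      · have := hu z
        rw [Finsupp.single_eq_of_ne' hz] at this ⊢
        omega

lemma mapDomain_mono' {τ σ : Type*} (g : τ → σ) {a b : τ →₀ ℕ} (h : a ≤ b) :
    Finsupp.mapDomain g a ≤ Finsupp.mapDomain g b := by
  rw [← add_tsub_cancel_of_le h, Finsupp.mapDomain_add]
  exact le_self_add

lemma mapDomain_getD_apply {σ : Type*} [DecidableEq σ] (x : σ) (w : Option σ →₀ ℕ) (v : σ) :
    Finsupp.mapDomain (fun o : Option σ => o.getD x) w v =
      w (some v) + if v = x then w none else 0 := by
  induction w using Finsupp.induction_linear with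
  | zero => simp
  | add a b iha ihb =>
    rw [Finsupp.mapDomain_add, Finsupp.add_apply, iha, ihb]
    simp only [Finsupp.add_apply]
    split_ifs <;> ring
  | single o n =>
    rw [Finsupp.mapDomain_single]
    cases o with
    | none =>
      simp only [Option.getD_none, Finsupp.single_apply]
      by_cases h : v = x
      · simp [h]
      · simp [h, Ne.symm h]
    | some z =>
      simp only [Option.getD_some, Finsupp.single_apply]
      simp

lemma fiber_ext {σ : Type*} (x : σ) (w w' : Option σ →₀ ℕ)
    (h : Finsupp.mapDomain (fun o : Option σ => o.getD x) w =
      Finsupp.mapDomain (fun o : Option σ => o.getD x) w') (h0 : w none = w' none) : w = w' := by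
  classical
  ext o
  cases o with
  | none => exact h0
  | some v =>
    have := DFunLike.congr_fun h v
    rw [mapDomain_getD_apply, mapDomain_getD_apply, h0] at this
    omega

lemma fiber_nsmul {τ σ : Type*} (g : τ → σ) (A : Set (σ →₀ ℕ)) (s : ℕ) :
    s • (Finsupp.mapDomain g ⁻¹' A : Set (τ →₀ ℕ)) = Finsupp.mapDomain g ⁻¹' (s • A) := by
  induction s with
  | zero =>
    ext w
    rw [zero_nsmul, zero_nsmul, Set.mem_preimage, Set.mem_zero, Set.mem_zero]
    constructor
    · rintro rfl; exact Finsupp.mapDomain_zero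
    · intro h
      ext v
      by_contra hv
      have h1 : Finsupp.single v 1 ≤ w := by
        rw [Finsupp.single_le_iff]
        simp at hv
        omega
      have h2 := mapDomain_mono' g h1
      rw [h, Finsupp.mapDomain_single] at h2
      have := h2 (g v)
      simp at this
  | succ n ih =>
    rw [succ_nsmul, succ_nsmul, ih]
    ext w
    rw [Set.mem_preimage, Set.mem_add, Set.mem_add]
    constructor
    · rintro ⟨a, ha, b, hb, rfl⟩
      exact ⟨_, ha, _, hb, (Finsupp.mapDomain_add).symm⟩
    · rintro ⟨a, ha, b, hb, hab⟩
      obtain ⟨w1, h1, e1⟩ := lift_le g w a (by rw [← hab]; exact le_self_add)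
      refine ⟨w1, by rwa [Set.mem_preimage, e1], w - w1, ?_, add_tsub_cancel_of_le h1⟩
      have h2 : Finsupp.mapDomain g w1 + Finsupp.mapDomain g (w - w1) = a + b := by
        rw [← Finsupp.mapDomain_add, add_tsub_cancel_of_le h1, hab]
      rw [e1] at h2
      rw [Set.mem_preimage, add_left_cancel h2]
      exact hb

lemma span_le_of_dom {K : Type*} [Field K] {τ : Type*} {A B : Set (τ →₀ ℕ)}
    (h : ∀ a ∈ A, ∃ b ∈ B, b ≤ a) :
    Ideal.span ((fun a => monomial a (1 : K)) '' A) ≤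
      Ideal.span ((fun a => monomial a (1 : K)) '' B) := by
  rw [Ideal.span_le]
  rintro _ ⟨a, ha, rfl⟩
  exact (mono_mem_span B a).2 (h a ha)

lemma dom_of_span_le {K : Type*} [Field K] {τ : Type*} {A B : Set (τ →₀ ℕ)}
    (h : Ideal.span ((fun a => monomial a (1 : K)) '' A) ≤
      Ideal.span ((fun a => monomial a (1 : K)) '' B)) :
    ∀ a ∈ A, ∃ b ∈ B, b ≤ a := fun a ha =>
  (mono_mem_span (K := K) B a).1 (h (Ideal.subset_span ⟨a, ha, rfl⟩))

lemma dom_fiber {τ σ : Type*} (g : τ → σ) {A B : Set (σ →₀ ℕ)} (h : ∀ a ∈ A, ∃ b ∈ B, b ≤ a) :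
    ∀ a ∈ (Finsupp.mapDomain g ⁻¹' A : Set (τ →₀ ℕ)),
      ∃ b ∈ (Finsupp.mapDomain g ⁻¹' B : Set (τ →₀ ℕ)), b ≤ a := by
  intro w hw
  obtain ⟨b, hb, hle⟩ := h _ hw
  obtain ⟨w', hw', rfl⟩ := lift_le g w b hle
  exact ⟨w', hb, hw'⟩

/-- The main combinatorial step: linear quotients lift along the fibre. -/
lemma hasLQ_fiber {K : Type*} [Field K] {σ : Type*} (x : σ) {r : ℕ} (d : Fin r → (σ →₀ ℕ))
    (hanti : ∀ i j : Fin r, i ≠ j → ¬ d i ≤ d j)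
    (hlq : ∀ i j : Fin r, j < i → ∃ k < i, ∃ v, d k ≤ d i + Finsupp.single v 1 ∧ d i v < d j v) :
    HasLinearQuotients (Ideal.span ((fun a => monomial a (1 : K)) ''
      (Finsupp.mapDomain (fun o : Option σ => o.getD x) ⁻¹' (Set.range d)))) := by
  classical
  set g : Option σ → σ := fun o => o.getD x with hg
  have hdinj : ∀ i j, d i = d j → i = j := by
    intro i j h
    by_contra hne
    exact hanti i j hne h.le
  have hidx : ∀ u, ∃ n : ℕ, ∀ i, d i = u → n = i := by
    intro u
    by_cases hu : ∃ i, d i = u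
    · obtain ⟨i, rfl⟩ := hu
      exact ⟨i, fun j hj => by rw [hdinj _ _ hj]⟩
    · exact ⟨0, fun i hi => (hu ⟨i, hi⟩).elim⟩
  choose idx hidx using hidx
  let key : (Option σ →₀ ℕ) → ℕ ×ₗ ℕ := fun w => toLex (idx (Finsupp.mapDomain g w), w none)
  have hkey : ∀ (w w' : Option σ →₀ ℕ) (i j : Fin r), d i = Finsupp.mapDomain g w →
      d j = Finsupp.mapDomain g w' →
      (key w < key w' ↔ i < j ∨ i = j ∧ w none < w' none) := by
    intro w w' i j hi hj
    simp only [key, Prod.Lex.toLex_lt_toLex]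
    rw [hidx _ i hi, hidx _ j hj]
    simp only [Fin.lt_def, Fin.ext_iff]
  apply hasLQ_of_key _ _ key
  · rintro w ⟨i, hi⟩ w' ⟨j, hj⟩ h
    simp only [key, EmbeddingLike.apply_eq_iff_eq, Prod.mk.injEq] at h
    rw [hidx _ i hi, hidx _ j hj] at h
    have hij : i = j := Fin.ext h.1
    apply fiber_ext x w w' _ h.2
    rw [← hg, ← hi, ← hj, hij]
  · rintro w ⟨i, hi⟩ w' ⟨j, hj⟩ hle
    have h1 := mapDomain_mono' g hle
    rw [← hi, ← hj] at h1
    have hij : i = j := by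
      by_contra hne
      exact hanti i j hne h1
    subst hij
    have h2 : Finsupp.mapDomain g w = Finsupp.mapDomain g w' := by rw [← hi, ← hj]
    apply fiber_ext x w w' h2
    have h3 := DFunLike.congr_fun h2 x
    rw [mapDomain_getD_apply, mapDomain_getD_apply, if_pos rfl, if_pos rfl] at h3
    have := hle none
    have := hle (some x)
    omega
  · rintro w ⟨i, hi⟩ w' ⟨j, hj⟩ hlt
    rw [hkey w' w j i hj hi] at hlt
    rcases hlt with hlt | ⟨rfl, hlt⟩
    · obtain ⟨k, hk, v, hkv, hv⟩ := hlq i j hlt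
      have hv' : ∃ v', g v' = v ∧ w v' < w' v' := by
        rw [hi, hj, mapDomain_getD_apply, mapDomain_getD_apply] at hv
        by_contra! hcon
        have h1 := hcon (some v) rfl
        split_ifs at hv with hvx
        · have h2 := hcon none hvx.symm
          omega
        · omega
      obtain ⟨v', rfl, hv'⟩ := hv'
      obtain ⟨c, hc, hce⟩ := lift_le g (w + Finsupp.single v' 1) (d k) (by
        rw [Finsupp.mapDomain_add, Finsupp.mapDomain_single, ← hi]
        exact hkv)
      exact ⟨c, ⟨k, hce.symm⟩, (hkey c w k i hce.symm hi).2 (Or.inl hk), v', hc, hv'⟩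
    · have h2 : Finsupp.mapDomain g w = Finsupp.mapDomain g w' := by rw [← hi, ← hj]
      have h3 := DFunLike.congr_fun h2 x
      rw [mapDomain_getD_apply, mapDomain_getD_apply, if_pos rfl, if_pos rfl] at h3
      have hle : Finsupp.single none 1 ≤ w := by
        rw [Finsupp.single_le_iff]; omega
      have hc : Finsupp.mapDomain g (w - Finsupp.single none 1 + Finsupp.single (some x) 1) =
          d j := by
        have h4 : Finsupp.mapDomain g (w - Finsupp.single none 1) +
            Finsupp.mapDomain g (Finsupp.single none 1) = Finsupp.mapDomain g w := by
          rw [← Finsupp.mapDomain_add, tsub_add_cancel_of_le hle]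
        rw [Finsupp.mapDomain_single] at h4
        rw [Finsupp.mapDomain_add, Finsupp.mapDomain_single, hi, ← h4]
        rfl
      refine ⟨_, ⟨j, hc.symm⟩, (hkey _ w j j hc.symm hi).2 (Or.inr ⟨rfl, ?_⟩), some x, ?_, ?_⟩
      · simp; omega
      · exact add_le_add tsub_le_self le_rfl
      · omega
  · -- finiteness of the fibre
    apply Set.Finite.of_finite_image (f := fun w => (Finsupp.mapDomain g w, w none))
    · apply Set.Finite.subset (s := ⋃ i, ({d i} : Set (σ →₀ ℕ)) ×ˢ Set.Iic (d i x))
      · exact Set.finite_iUnion fun i => (Set.finite_singleton _).prod (Set.finite_Iic _)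
      · rintro _ ⟨w, ⟨i, hi⟩, rfl⟩
        simp only [Set.mem_iUnion]
        refine ⟨i, hi.symm, ?_⟩
        simp only [Set.mem_Iic]
        rw [hi, mapDomain_getD_apply, if_pos rfl]
        omega
    · intro w _ w' _ h
      simp only [Prod.mk.injEq] at h
      exact fiber_ext x w w' h.1 h.2

lemma dup_gens {K : Type*} [Field K] {σ : Type*} {r : ℕ} (d : Fin r → (σ →₀ ℕ)) (x : σ)
    (hsf : ∀ (i : Fin r) (v : σ), d i v ≤ 1) :
    ((Set.range fun i => (monomial (Finsupp.mapDomain Option.some (d i)) (1 : K))) ∪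
          {m | ∃ i : Fin r, d i x ≠ 0 ∧
            m = monomial
              (Finsupp.mapDomain Option.some (d i - Finsupp.single x 1) +
                Finsupp.single (none : Option σ) 1) (1 : K)}) =
    (fun a => monomial a (1 : K)) ''
      (Finsupp.mapDomain (fun o : Option σ => o.getD x) ⁻¹' (Set.range d)) := by
  classical
  have hsome : ∀ u : σ →₀ ℕ, Finsupp.mapDomain (fun o : Option σ => o.getD x)
      (Finsupp.mapDomain Option.some u) = u := by
    intro u
    rw [← Finsupp.mapDomain_comp]
    exact Finsupp.mapDomain_id
  have hnone : ∀ u : σ →₀ ℕ, (Finsupp.mapDomain Option.some u) none = 0 := fun u =>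
    Finsupp.mapDomain_of_notMem_range _ _ (by simp)
  have hdup : ∀ i, d i x ≠ 0 → Finsupp.mapDomain (fun o : Option σ => o.getD x)
      (Finsupp.mapDomain Option.some (d i - Finsupp.single x 1) +
                Finsupp.single (none : Option σ) 1) = d i := by
    intro i hi
    rw [Finsupp.mapDomain_add, hsome, Finsupp.mapDomain_single]
    exact tsub_add_cancel_of_le (Finsupp.single_le_iff.2 (by omega))
  ext f
  constructor
  · rintro (⟨i, rfl⟩ | ⟨i, hi, rfl⟩)
    · exact ⟨_, ⟨i, (hsome _).symm⟩, rfl⟩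
    · exact ⟨_, ⟨i, (hdup i hi).symm⟩, rfl⟩
  · rintro ⟨w, ⟨i, hi⟩, rfl⟩
    have h1 := hsf i x
    have h2 := DFunLike.congr_fun hi x
    rw [mapDomain_getD_apply, if_pos rfl] at h2
    by_cases h0 : w none = 0
    · left
      refine ⟨i, ?_⟩
      have : Finsupp.mapDomain some (d i) = w := by
        apply fiber_ext x
        · rw [hsome, hi]
        · rw [hnone, h0]
      simp only [this]
    · right
      have hx : d i x ≠ 0 := by omega
      refine ⟨i, hx, ?_⟩
      have : w = Finsupp.mapDomain Option.some (d i - Finsupp.single x 1) +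
                Finsupp.single (none : Option σ) 1 := by
        apply fiber_ext x
        · rw [hdup i hx, hi]
        · rw [Finsupp.add_apply, hnone, Finsupp.single_eq_same]
          omega
      simp only [← this]

end Helpers

/-- let `I` be an equigenerated squarefree monomial ideal with minimal
generating exponents `d i` (squarefree, equigenerated, an antichain), `x` a variable and
`s ≥ 1`. If `I^s` has linear quotients then so does `(I^x)^s`, where `I^x` is the duplicate
ideal of `I` by `x`, living in the polynomial ring with the extra variable `none`. -/
theorem stmt5 {K : Type*} [Field K] {σ : Type*} {r : ℕ} (d : Fin r → (σ →₀ ℕ)) (x : σ)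
    (hsf : ∀ (i : Fin r) (v : σ), d i v ≤ 1)
    (hmin : ∀ i j : Fin r, i ≠ j → ¬ d i ≤ d j)
    (heq : ∃ t : ℕ, ∀ i : Fin r, ((d i).sum fun _ k => k) = t)
    (s : ℕ) (hs : 1 ≤ s)
    (h : HasLinearQuotients ((Ideal.span (Set.range fun i => (monomial (d i) (1 : K)))) ^ s)) :
    HasLinearQuotients
      ((Ideal.span
        ((Set.range fun i => (monomial (Finsupp.mapDomain Option.some (d i)) (1 : K))) ∪
          {m | ∃ i : Fin r, d i x ≠ 0 ∧
            m = monomial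
              (Finsupp.mapDomain Option.some (d i - Finsupp.single x 1) +
                Finsupp.single (none : Option σ) 1) (1 : K)})) ^ s) := by
  rw [dup_gens d x hsf, span_pow_mono, fiber_nsmul]
  rw [show (Set.range fun i => (monomial (d i) (1 : K))) =
    (fun a => monomial a (1 : K)) '' Set.range d from Set.range_comp (fun a => monomial a (1 : K)) d, span_pow_mono] at h
  obtain ⟨r', d', hanti, hspan, hq⟩ := h
  rw [show (Set.range fun i => (monomial (d' i) (1 : K))) =
    (fun a => monomial a (1 : K)) '' Set.range d' from Set.range_comp (fun a => monomial a (1 : K)) d'] at hspan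
  have key := hasLQ_fiber (K := K) x d' hanti (by
    intro i j hj
    have hi := hq i
    rw [show (fun j => (monomial (d' j) (1 : K))) '' {j | j < i} =
      (fun a => monomial a (1 : K)) '' (d' '' {j | j < i}) from
        (Set.image_image (fun a => monomial a (1 : K)) d' _).symm] at hi
    obtain ⟨_, ⟨k, hk, rfl⟩, v, h1, h2⟩ := genByVars_colon_fwd _ _ hi (d' j) ⟨j, hj, rfl⟩
    exact ⟨k, hk, v, h1, h2⟩)
  convert key using 1
  exact le_antisymm (span_le_of_dom (dom_fiber _ (dom_of_span_le hspan.ge)))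
    (span_le_of_dom (dom_fiber _ (dom_of_span_le hspan.le)))
end

section
/- Let G be a finite simple graph such that I(G)^s has linear quotients for some s ≥ 1, and let x ∈ V(G). Then I(G^{[x]})^s has linear quotients if and only if G^{[x]} is gapfree. -/
open MvPolynomial

/-- A graph is gapfree if any two disjoint edges are joined by an edge meeting both. -/
def Gapfree {V : Type*} (G : SimpleGraph V) : Prop :=
  ∀ a b c d : V, G.Adj a b → G.Adj c d → ({a, b} : Set V) ∩ {c, d} = ∅ →
    ∃ u v : V, G.Adj u v ∧ (({u, v} : Set V) ∩ {a, b}).Nonempty ∧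
      (({u, v} : Set V) ∩ {c, d}).Nonempty

/-- The edge ideal of a graph. -/
noncomputable def edgeIdeal (K : Type*) [Field K] {V : Type*} (G : SimpleGraph V) :
    Ideal (MvPolynomial V K) :=
  Ideal.span {m | ∃ a b : V, G.Adj a b ∧ m = X a * X b}

/-- The expansion `G^[x]` of `G` at `x`: a new vertex (represented by `none`) is joined
to `x` and to every neighbor of `x`. -/
def expansion {V : Type*} (G : SimpleGraph V) (x : V) : SimpleGraph (Option V) :=
  SimpleGraph.fromRel (fun u v =>
    (∃ a b : V, u = some a ∧ v = some b ∧ G.Adj a b) ∨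
    (∃ b : V, u = none ∧ v = some b ∧ (b = x ∨ G.Adj x b)))

open Classical in
/-- endpoints multiset -/
noncomputable def endsM {W : Type*} (P : Multiset (W × W)) : Multiset W :=
  P.map Prod.fst + P.map Prod.snd

def EPow {W : Type*} (H : SimpleGraph W) (s : ℕ) : Set (Multiset W) :=
  {u | ∃ P : Multiset (W × W), P.card = s ∧ (∀ e ∈ P, H.Adj e.1 e.2) ∧ endsM P = u}

lemma endsM_cons {W : Type*} (e : W × W) (P : Multiset (W × W)) :
    endsM (e ::ₘ P) = e.1 ::ₘ e.2 ::ₘ endsM P := by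
  simp [endsM, Multiset.cons_swap]

lemma endsM_zero {W : Type*} : endsM (0 : Multiset (W × W)) = 0 := by simp [endsM]

lemma card_endsM {W : Type*} (P : Multiset (W × W)) : (endsM P).card = 2 * P.card := by
  simp [endsM]; ring

lemma card_EPow {W : Type*} {H : SimpleGraph W} {s : ℕ} {u : Multiset W} (h : u ∈ EPow H s) :
    u.card = 2 * s := by
  obtain ⟨P, rfl, _, rfl⟩ := h
  exact card_endsM P

/-- exchange from a sub-multiset of a one point extension -/
lemma exists_erase {W : Type*} [DecidableEq W] {u w : Multiset W} {t : W} (h : w ≤ t ::ₘ u)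
    (hc : w.card = u.card) (hne : w ≠ u) : ∃ p, p ∈ u ∧ p ≠ t ∧ w = t ::ₘ u.erase p := by
  obtain ⟨q, hq⟩ := Multiset.le_iff_exists_add.1 h
  have hq1 : q.card = 1 := by
    have := congrArg Multiset.card hq
    simp at this; omega
  obtain ⟨p, rfl⟩ := Multiset.card_eq_one.1 hq1
  have hpt : p ≠ t := by
    rintro rfl
    apply hne
    rw [add_comm, Multiset.singleton_add] at hq
    exact ((Multiset.cons_inj_right _).1 hq).symm
  have hp : p ∈ u := by
    have : p ∈ t ::ₘ u := by rw [hq]; simp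
    simpa [hpt] using this
  refine ⟨p, hp, hpt, ?_⟩
  have := congrArg (fun m => Multiset.erase m p) hq
  simp only [add_comm w, Multiset.singleton_add, Multiset.erase_cons_head] at this
  rw [← this, Multiset.erase_cons_tail _ (Ne.symm hpt)]

/-- the combinatorial condition -/
def CLQ {W : Type*} {α : Type*} [LinearOrder α] [DecidableEq W] (S : Set (Multiset W)) (f : Multiset W → α) : Prop :=
  Set.InjOn f S ∧ ∀ u ∈ S, ∀ v ∈ S, f v < f u →
    ∃ t, u.count t < v.count t ∧ ∃ w ∈ S, f w < f u ∧ w ≤ t ::ₘ u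

open Classical in
lemma gap_count {W : Type*} (a b c d : W) (P : Multiset (W × W))
    (hP : ∀ e ∈ P, e = (a,b) ∨ e = (b,a) ∨ e = (c,d) ∨ e = (d,c)) :
    (endsM P).count a + (endsM P).count d * 0 = (endsM P).count b + 0 ∨ a = c ∨ a = d ∨ b = c ∨ b = d := by
  induction P using Multiset.induction_on with
  | empty => simp [endsM]
  | cons e P ih =>
    rw [endsM_cons]
    have ih := ih (fun e he => hP e (Multiset.mem_cons_of_mem he))
    have := hP e (Multiset.mem_cons_self _ _)
    simp only [Multiset.count_cons]
    grind

open Classical in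
lemma gapfree_of_CLQ {W : Type*} {α : Type*} [LinearOrder α] (H : SimpleGraph W) (s : ℕ)
    (hs : 1 ≤ s) (f : Multiset W → α) (h : CLQ (EPow H s) f) : Gapfree H := by
  intro a b c d hab hcd hdis
  by_contra hcon
  push Not at hcon
  have hac : a ≠ c := by rintro rfl; have : a ∈ ({a,b} : Set W) ∩ {a,d} := by simp
                         simp [hdis] at this
  have had : a ≠ d := by rintro rfl; have : a ∈ ({a,b} : Set W) ∩ {c,a} := by simp
                         simp [hdis] at this
  have hbc : b ≠ c := by rintro rfl; have : b ∈ ({a,b} : Set W) ∩ {b,d} := by simp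
                         simp [hdis] at this
  have hbd : b ≠ d := by rintro rfl; have : b ∈ ({a,b} : Set W) ∩ {c,b} := by simp
                         simp [hdis] at this
  have hne : ∀ p q, (p = a ∨ p = b) → (q = c ∨ q = d) → ¬ H.Adj p q := by
    intro p q hp hq hpq
    have h1 : (({p, q} : Set W) ∩ {a, b}).Nonempty := ⟨p, by simp, by simpa using hp⟩
    have := hcon p q hpq h1
    have h2 : q ∈ ({p, q} : Set W) ∩ {c, d} := ⟨by simp, by simpa using hq⟩
    rw [this] at h2
    exact h2
  have key : ∀ u ∈ EPow H s, (∀ y ∈ u, y = a ∨ y = b ∨ y = c ∨ y = d) →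
      u.count a = u.count b ∧ u.count c = u.count d := by
    rintro u ⟨P, _, hP, rfl⟩ hu
    have hP' : ∀ e ∈ P, e = (a,b) ∨ e = (b,a) ∨ e = (c,d) ∨ e = (d,c) := by
      rintro ⟨p, q⟩ he
      have h1 := hu p (by simp only [endsM, Multiset.mem_add, Multiset.mem_map]; exact Or.inl ⟨_, he, rfl⟩)
      have h2 := hu q (by simp only [endsM, Multiset.mem_add, Multiset.mem_map]; exact Or.inr ⟨_, he, rfl⟩)
      have h3 := hP _ he
      have h4 := h3.ne
      have h5 := hne p q
      have h6 := hne q p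
      have h7 := h3.symm
      simp only [Prod.mk.injEq] at *
      grind
    have h1 := gap_count a b c d P hP'
    have h2 := gap_count c d a b P (fun e he => by have := hP' e he; tauto)
    grind
  have mem : ∀ p q, H.Adj p q → endsM (Multiset.replicate s (p,q)) ∈ EPow H s := by
    intro p q hpq
    refine ⟨_, by simp, ?_, rfl⟩
    intro e he
    rw [Multiset.eq_of_mem_replicate he]; exact hpq
  have cnt : ∀ p q y : W, y ∈ endsM (Multiset.replicate s (p,q)) ↔ y = p ∨ y = q := by
    intro p q y
    simp [endsM, Multiset.mem_replicate]; grind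
  have main : ∀ u ∈ EPow H s, ∀ v ∈ EPow H s, (∀ y ∈ u, y = a ∨ y = b ∨ y = c ∨ y = d) →
      (∀ y ∈ v, y = a ∨ y = b ∨ y = c ∨ y = d) → ¬ f v < f u := by
    intro u hu v hv hu' hv' hlt
    obtain ⟨t, ht, w, hw, hwu, hle⟩ := h.2 u hu v hv hlt
    have htv : t ∈ v := Multiset.count_pos.1 (by omega)
    obtain ⟨p, hp, hpt, rfl⟩ := exists_erase hle (by rw [card_EPow hw, card_EPow hu])
      (by rintro rfl; exact lt_irrefl _ hwu)
    have h1 := key u hu hu'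
    have h2 := key _ hw (by
      intro y hy
      rcases Multiset.mem_cons.1 hy with rfl | hy
      · exact hv' _ htv
      · exact hu' _ (Multiset.mem_of_mem_erase hy))
    have h3 := hv' t htv
    have h4 := hu' p hp
    have := hab.ne
    have := hcd.ne
    have h5 : u = p ::ₘ u.erase p := (Multiset.cons_erase hp).symm
    generalize u.erase p = u0 at *
    subst h5
    simp only [Multiset.count_cons] at h1 h2
    grind
  have hA := mem a b hab
  have hC := mem c d hcd
  have hAC : endsM (Multiset.replicate s (a,b)) ≠ endsM (Multiset.replicate s (c,d)) := by
    intro hh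
    have : a ∈ endsM (Multiset.replicate s (c,d)) := by rw [← hh, cnt]; simp
    rw [cnt] at this; tauto
  rcases lt_trichotomy (f (endsM (Multiset.replicate s (a,b)))) (f (endsM (Multiset.replicate s (c,d)))) with h1 | h1 | h1
  · exact main _ hC _ hA (by intro y; rw [cnt]; tauto) (by intro y; rw [cnt]; tauto) h1
  · exact hAC (h.1 hA hC h1)
  · exact main _ hA _ hC (by intro y; rw [cnt]; tauto) (by intro y; rw [cnt]; tauto) h1

/-- exchange property for transversal polymatroids -/
lemma exchange {Z W : Type*} [DecidableEq W] (R : Z → W → Prop) (n : ℕ) : ∀ (T : Multiset (Z × W × W)) (t : W),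
    T.card = n → (∀ e ∈ T, R e.1 e.2.1 ∧ R e.1 e.2.2) →
    (T.map (fun e => e.2.1)).count t < (T.map (fun e => e.2.2)).count t →
    ∃ (w : W) (P : Multiset (Z × W)), (∀ e ∈ P, R e.1 e.2) ∧ P.map Prod.fst = T.map Prod.fst ∧
      w ::ₘ P.map Prod.snd = t ::ₘ T.map (fun e => e.2.1) ∧
      (T.map (fun e => e.2.2)).count w < (T.map (fun e => e.2.1)).count w := by
  induction n with
  | zero =>
    intro T t hT _ h
    rw [Multiset.card_eq_zero] at hT
    subst hT
    simp at h
  | succ n ih =>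
    intro T t hT hR h
    have : ∃ e ∈ T, e.2.2 = t ∧ e.2.1 ≠ t := by
      by_contra hcon
      push Not at hcon
      apply absurd h
      rw [not_lt, Multiset.count_map, Multiset.count_map]
      apply Multiset.card_le_card
      classical
      rw [Multiset.le_iff_count]
      intro e
      rw [Multiset.count_filter, Multiset.count_filter]
      by_cases he : e ∈ T
      · have := hcon e he
        grind
      · rw [Multiset.count_eq_zero_of_notMem he]; simp
    obtain ⟨⟨z, p, t'⟩, he, rfl, hpt⟩ := this
    obtain ⟨T0, rfl⟩ := Multiset.exists_cons_of_mem he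
    simp only at hpt h ⊢
    have hRe := hR _ (Multiset.mem_cons_self _ _)
    have hR0 : ∀ e ∈ T0, R e.1 e.2.1 ∧ R e.1 e.2.2 := fun e he => hR e (Multiset.mem_cons_of_mem he)
    simp only [Multiset.map_cons, Multiset.count_cons] at h ⊢
    by_cases hp : (T0.map (fun e => e.2.1)).count p < (T0.map (fun e => e.2.2)).count p
    · obtain ⟨w, P, hP, h1, h2, h3⟩ := ih T0 p (by simpa using hT) hR0 hp
      refine ⟨w, (z, t') ::ₘ P, ?_, by simp [h1], ?_, ?_⟩
      · intro e he
        rcases Multiset.mem_cons.1 he with rfl | he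
        · exact hRe.2
        · exact hP e he
      · rw [Multiset.map_cons, Multiset.cons_swap, h2]
      · grind
    · refine ⟨p, (z, t') ::ₘ T0.map (fun e => (e.1, e.2.1)), ?_, by simp, ?_, ?_⟩
      · intro e he
        rcases Multiset.mem_cons.1 he with rfl | he
        · exact hRe.2
        · obtain ⟨e', he', rfl⟩ := Multiset.mem_map.1 he
          exact (hR0 e' he').1
      · simp [Multiset.cons_swap]
      · grind

lemma triples {Z W : Type*} (P Q : Multiset (Z × W)) (h : P.map Prod.fst = Q.map Prod.fst) :
    ∃ T : Multiset (Z × W × W), T.map (fun e => (e.1, e.2.1)) = P ∧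
      T.map (fun e => (e.1, e.2.2)) = Q := by
  have h' : Multiset.Rel (fun p q : Z × W => p.1 = q.1) P Q := by
    rw [← Multiset.rel_eq, Multiset.rel_map] at h
    exact h
  clear h
  induction h' with
  | zero => exact ⟨0, by simp⟩
  | @cons a b as bs hab _ ih =>
    obtain ⟨T, h1, h2⟩ := ih
    refine ⟨(a.1, a.2, b.2) ::ₘ T, by simp [h1], ?_⟩
    simp [h2, hab]

section bridge
open Classical

lemma edgeIdeal_pow_eq (K : Type*) [Field K] {V : Type*} (G : SimpleGraph V) (s : ℕ) :
    edgeIdeal K G ^ s =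
      Ideal.span ((fun m => monomial m (1 : K)) '' (Multiset.toFinsupp '' EPow G s)) := by
  induction s with
  | zero =>
    have : EPow G 0 = {0} := by
      ext u
      constructor
      · rintro ⟨P, hP, _, rfl⟩
        rw [Multiset.card_eq_zero] at hP
        subst hP
        simp [endsM]
      · rintro rfl
        exact ⟨0, by simp, by simp, by simp [endsM]⟩
    rw [this]
    simp
  | succ s ih =>
    rw [pow_succ, ih, edgeIdeal, Ideal.span_mul_span']
    congr 1
    have hmul : ∀ (a b : V) (u : Multiset V),
        monomial (Multiset.toFinsupp (a ::ₘ b ::ₘ u)) (1 : K)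
          = monomial (Multiset.toFinsupp u) 1 * (X a * X b) := by
      intro a b u
      rw [X, X, monomial_mul, monomial_mul]
      congr 1
      · rw [← Multiset.singleton_add, ← Multiset.singleton_add, map_add, map_add,
          Multiset.toFinsupp_singleton, Multiset.toFinsupp_singleton]
        rw [← add_assoc, add_comm]
      · simp
    ext m
    constructor
    · rintro ⟨_, ⟨_, ⟨u, ⟨P, hP, hadj, rfl⟩, rfl⟩, rfl⟩, _, ⟨a, b, hab, rfl⟩, rfl⟩
      refine ⟨_, ⟨endsM ((a,b) ::ₘ P), ⟨(a,b) ::ₘ P, by simp [hP], ?_, rfl⟩, rfl⟩, ?_⟩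
      · intro e he
        rcases Multiset.mem_cons.1 he with rfl | he
        · exact hab
        · exact hadj e he
      · rw [endsM_cons]
        exact hmul a b _
    · rintro ⟨_, ⟨u, ⟨P, hP, hadj, rfl⟩, rfl⟩, rfl⟩
      obtain ⟨e, he⟩ : ∃ e, e ∈ P := Multiset.card_pos_iff_exists_mem.1 (by omega)
      obtain ⟨P, rfl⟩ := Multiset.exists_cons_of_mem he
      refine Set.mem_mul.2 ⟨_, ⟨_, ⟨endsM P, ⟨P, by simpa using hP, fun e he => hadj e (Multiset.mem_cons_of_mem he), rfl⟩, rfl⟩, rfl⟩,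
        X e.1 * X e.2, ⟨e.1, e.2, hadj e (Multiset.mem_cons_self _ _), rfl⟩, ?_⟩
      rw [endsM_cons]
      exact (hmul _ _ _).symm

lemma monomial_mem_span {K : Type*} [Field K] {V : Type*} (A : Set (V →₀ ℕ)) (m : V →₀ ℕ) :
    monomial m (1 : K) ∈ Ideal.span ((fun m => monomial m (1 : K)) '' A) ↔ ∃ a ∈ A, a ≤ m := by
  rw [mem_ideal_span_monomial_image]
  rw [support_monomial]
  simp

lemma eq_of_le_EPow {V : Type*} {G : SimpleGraph V} {s : ℕ} {u v : Multiset V}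
    (hu : u ∈ EPow G s) (hv : v ∈ EPow G s) (h : u ≤ v) : u = v :=
  Multiset.eq_of_le_of_card_le h (by rw [card_EPow hu, card_EPow hv])

lemma CLQ_of_HasLinearQuotients {K : Type*} [Field K] {V : Type*} (G : SimpleGraph V) (s : ℕ)
    (h : HasLinearQuotients (edgeIdeal K G ^ s)) :
    (EPow G s).Finite ∧ ∃ f : Multiset V → ℕ, CLQ (EPow G s) f := by
  obtain ⟨r, d, hanti, hspan, hcol⟩ := h
  rw [edgeIdeal_pow_eq] at hspan
  have hspan' : Ideal.span ((fun m => monomial m (1 : K)) '' Set.range d) =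
      Ideal.span ((fun m => monomial m (1 : K)) '' (Multiset.toFinsupp '' EPow G s)) := by
    rw [← hspan, ← Set.range_comp]; rfl
  have h1 : ∀ u ∈ EPow G s, ∃ i, d i ≤ Multiset.toFinsupp u := by
    intro u hu
    have : monomial (Multiset.toFinsupp u) (1 : K) ∈ Ideal.span ((fun m => monomial m (1 : K)) '' Set.range d) := by
      rw [hspan']; exact Ideal.subset_span ⟨_, ⟨u, hu, rfl⟩, rfl⟩
    rw [monomial_mem_span] at this
    obtain ⟨_, ⟨i, rfl⟩, hi⟩ := this
    exact ⟨i, hi⟩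
  have h2 : ∀ i, ∃ u ∈ EPow G s, Multiset.toFinsupp u ≤ d i := by
    intro i
    have : monomial (d i) (1 : K) ∈ Ideal.span ((fun m => monomial m (1 : K)) '' (Multiset.toFinsupp '' EPow G s)) := by
      rw [← hspan']; exact Ideal.subset_span ⟨_, ⟨i, rfl⟩, rfl⟩
    rw [monomial_mem_span] at this
    obtain ⟨_, ⟨u, hu, rfl⟩, hi⟩ := this
    exact ⟨u, hu, hi⟩
  have tole : ∀ u v : Multiset V, Multiset.toFinsupp u ≤ Multiset.toFinsupp v ↔ u ≤ v := by
    intro u v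
    rw [Finsupp.le_def, Multiset.le_iff_count]
    simp [Multiset.toFinsupp_apply]
  have h3 : ∀ u ∈ EPow G s, ∃ i, d i = Multiset.toFinsupp u := by
    intro u hu
    obtain ⟨i, hi⟩ := h1 u hu
    obtain ⟨u', hu', hi'⟩ := h2 i
    have := eq_of_le_EPow hu' hu ((tole _ _).1 (hi'.trans hi))
    subst this
    exact ⟨i, le_antisymm hi hi'⟩
  have h4 : ∀ i, ∃ u ∈ EPow G s, d i = Multiset.toFinsupp u := by
    intro i
    obtain ⟨u, hu, hi⟩ := h2 i
    obtain ⟨j, hj⟩ := h3 u hu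
    by_cases hij : j = i
    · subst hij; exact ⟨u, hu, hj⟩
    · exact absurd (hj.le.trans hi) (hanti j i hij)
  have dinj : ∀ i j, d i = d j → i = j := by
    intro i j hij
    by_contra hne
    exact hanti i j hne hij.le
  refine ⟨?_, fun u => if hu : ∃ i, d i = Multiset.toFinsupp u then (hu.choose : ℕ) else 0, ?_, ?_⟩
  · refine ((Set.finite_range d).image Multiset.toFinsupp.symm).subset ?_
    intro u hu
    obtain ⟨i, hi⟩ := h3 u hu
    exact ⟨_, ⟨i, rfl⟩, by rw [hi]; simp⟩
  · intro u hu v hv huv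
    simp only [dif_pos (h3 u hu), dif_pos (h3 v hv)] at huv
    have e1 := (h3 u hu).choose_spec
    have e2 := (h3 v hv).choose_spec
    rw [Fin.ext huv, e2] at e1
    exact (Multiset.toFinsupp.injective e1).symm
  · intro u hu v hv hlt
    simp only [dif_pos (h3 u hu), dif_pos (h3 v hv)] at hlt ⊢
    have e1 := (h3 u hu).choose_spec
    have e2 := (h3 v hv).choose_spec
    generalize (h3 u hu).choose = i at *
    generalize (h3 v hv).choose = j at *
    obtain ⟨S, hS⟩ := hcol i
    have himg : (fun j => (monomial (d j) (1 : K))) '' {j | j < i} =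
      (fun m => (monomial m (1 : K))) '' (d '' {j | j < i}) := by rw [Set.image_image]
    rw [himg] at hS
    have hmem : monomial (d j - d i) (1 : K) ∈ Ideal.span ((fun i => (X i : MvPolynomial V K)) '' S) := by
      rw [← hS, Ideal.mem_colon_span_singleton, monomial_mul, one_mul, monomial_mem_span]
      exact ⟨d j, ⟨j, hlt, rfl⟩, le_tsub_add⟩
    rw [show (fun i => (X i : MvPolynomial V K)) = X from rfl, mem_ideal_span_X_image] at hmem
    obtain ⟨t, htS, ht⟩ := hmem (d j - d i) (by rw [support_monomial]; simp)
    have hX : (X t : MvPolynomial V K) ∈ Ideal.span ((fun i => (X i : MvPolynomial V K)) '' S) :=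
      Ideal.subset_span ⟨t, htS, rfl⟩
    rw [← hS, Ideal.mem_colon_span_singleton, X, monomial_mul, one_mul, monomial_mem_span] at hX
    obtain ⟨_, ⟨k, hk, rfl⟩, hkle⟩ := hX
    refine ⟨t, ?_, ?_⟩
    · rw [e1, e2] at ht
      simp [Multiset.toFinsupp_apply] at ht
      omega
    · obtain ⟨w, hw, hwk⟩ := h4 k
      refine ⟨w, hw, ?_, ?_⟩
      · rw [dif_pos (h3 w hw)]
        have e3 := (h3 w hw).choose_spec
        generalize (h3 w hw).choose = k' at *
        rw [← hwk] at e3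
        rw [dinj _ _ e3]
        exact hk
      · rw [← tole, ← hwk, ← Multiset.singleton_add, map_add, Multiset.toFinsupp_singleton, ← e1]
        exact hkle

lemma HasLinearQuotients_of_CLQ {K : Type*} [Field K] {V : Type*} (G : SimpleGraph V) (s : ℕ)
    (hfin : (EPow G s).Finite) {α : Type*} [LinearOrder α] (f : Multiset V → α)
    (h : CLQ (EPow G s) f) : HasLinearQuotients (edgeIdeal K G ^ s) := by
  set S : Finset (Multiset V) := hfin.toFinset with hSdef
  have hS : ∀ u, u ∈ S ↔ u ∈ EPow G s := by simp [hSdef]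
  set e := (S.image f).orderEmbOfFin rfl with he
  have hex : ∀ i, ∃ u ∈ EPow G s, f u = e i := by
    intro i
    have := Finset.orderEmbOfFin_mem (S.image f) rfl i
    obtain ⟨u, hu, hfu⟩ := Finset.mem_image.1 this
    exact ⟨u, (hS u).1 hu, hfu⟩
  choose D hD hfD using hex
  have hsurj : ∀ u ∈ EPow G s, ∃ i, D i = u := by
    intro u hu
    have : f u ∈ Set.range e := by
      rw [he, Finset.range_orderEmbOfFin]
      exact Finset.mem_image_of_mem f ((hS u).2 hu)
    obtain ⟨i, hi⟩ := this
    exact ⟨i, h.1 (hD i) hu (by rw [hfD, hi])⟩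
  have tole : ∀ u v : Multiset V, Multiset.toFinsupp u ≤ Multiset.toFinsupp v ↔ u ≤ v := by
    intro u v
    rw [Finsupp.le_def, Multiset.le_iff_count]
    simp [Multiset.toFinsupp_apply]
  refine ⟨_, fun i => Multiset.toFinsupp (D i), ?_, ?_, ?_⟩
  · intro i j hij hle
    rw [tole] at hle
    have := eq_of_le_EPow (hD i) (hD j) hle
    apply hij
    apply e.injective
    rw [← hfD, ← hfD, this]
  · rw [edgeIdeal_pow_eq]
    congr 1
    ext m
    constructor
    · rintro ⟨i, rfl⟩
      exact ⟨_, ⟨_, hD i, rfl⟩, rfl⟩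
    · rintro ⟨_, ⟨u, hu, rfl⟩, rfl⟩
      obtain ⟨i, rfl⟩ := hsurj u hu
      exact ⟨i, rfl⟩
  · intro i
    refine ⟨{t | ∃ k < i, D k ≤ t ::ₘ D i}, ?_⟩
    have himg : (fun j => (monomial (Multiset.toFinsupp (D j)) (1 : K))) '' {j | j < i} =
      (fun m => (monomial m (1 : K))) '' ((fun j => Multiset.toFinsupp (D j)) '' {j | j < i}) := by
      rw [Set.image_image]
    rw [himg]
    apply le_antisymm
    · intro p hp
      rw [Ideal.mem_colon_span_singleton, mem_ideal_span_monomial_image] at hp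
      rw [show (fun i => (X i : MvPolynomial V K)) = X from rfl, mem_ideal_span_X_image]
      intro m hm
      obtain ⟨_, ⟨j, hj, rfl⟩, hle⟩ := hp (m + Multiset.toFinsupp (D i)) (by
        rw [mem_support_iff, coeff_mul_monomial, mul_one]
        exact mem_support_iff.1 hm)
      obtain ⟨t, ht, w, hw, hwlt, hwle⟩ := h.2 (D i) (hD i) (D j) (hD j) (by
        rw [hfD, hfD]; exact e.strictMono hj)
      obtain ⟨k, rfl⟩ := hsurj w hw
      refine ⟨t, ⟨k, ?_, hwle⟩, ?_⟩
      · rw [hfD, hfD] at hwlt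
        exact e.lt_iff_lt.1 hwlt
      · have := hle t
        simp [Multiset.toFinsupp_apply] at this
        omega
    · rw [Ideal.span_le]
      rintro _ ⟨t, ⟨k, hk, hle⟩, rfl⟩
      beta_reduce
      rw [SetLike.mem_coe, Ideal.mem_colon_span_singleton, X, monomial_mul, one_mul, monomial_mem_span]
      refine ⟨_, ⟨k, hk, rfl⟩, ?_⟩
      rw [← tole, ← Multiset.singleton_add, map_add, Multiset.toFinsupp_singleton] at hle
      exact hle

lemma lexrank {W : Type u} [DecidableEq W] : ∃ (α : Type u) (_ : LinearOrder α) (g : Multiset W → α),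
    Function.Injective g ∧ ∀ u v, g v < g u → ∃ t, u.count t < v.count t ∧
      ∀ p ∈ u, v.count p < u.count p → g (t ::ₘ u.erase p) < g u := by
  have hE : ∃ cnt : Multiset W → W → ℕ, ∀ u t, u.count t = cnt u t := ⟨fun u t => u.count t, fun _ _ => rfl⟩
  obtain ⟨cnt, hcnt⟩ := hE
  have hinj : Function.Injective cnt := by
    intro u v huv
    ext t
    rw [hcnt, hcnt, huv]
  have h1 : ∀ u t p, p ∈ u → p ≠ t → cnt (t ::ₘ u.erase p) t = cnt u t + 1 := by
    intro u t p hp hpt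
    rw [← hcnt, ← hcnt]
    simp [Multiset.count_erase_of_ne hpt.symm]
  have h2 : ∀ u t p j, j ≠ p → j ≠ t → cnt (t ::ₘ u.erase p) j = cnt u j := by
    intro u t p j hp hpt
    rw [← hcnt, ← hcnt]
    simp [Multiset.count_cons_of_ne hpt, Multiset.count_erase_of_ne hp]
  simp only [hcnt]
  clear hcnt
  obtain ⟨inst, hwf⟩ := exists_wellFoundedLT W
  refine ⟨(Lex (W → ℕ))ᵒᵈ, inferInstance, fun u => OrderDual.toDual (toLex (cnt u)), ?_, ?_⟩
  · intro u v huv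
    exact hinj huv
  · intro u v huv
    rw [OrderDual.toDual_lt_toDual] at huv
    obtain ⟨t, ht, htlt⟩ := huv
    refine ⟨t, htlt, ?_⟩
    intro p hp hplt
    have hpt : p ≠ t := by
      rintro rfl
      exact absurd htlt (not_lt.2 hplt.le)
    have hpt' : ¬ p < t := by
      intro hh
      have h3 : cnt u p = cnt v p := ht p hh
      omega
    rw [OrderDual.toDual_lt_toDual]
    refine ⟨t, ?_, ?_⟩
    · intro j hj
      exact (h2 u t p j (by rintro rfl; exact hpt' hj) hj.ne).symm
    · have h5 := (Nat.lt_succ_self (cnt u t)).trans_eq (h1 u t p hp hpt).symm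
      exact h5

end bridge

section expansion
open Classical

variable {V : Type*} (G : SimpleGraph V) (x : V)

/-- neighbours of `x`, seen in the expansion -/
def NB (z : Option V) : Prop := ∃ a, z = some a ∧ G.Adj x a

/-- the folding map -/
def fold (o : Option V) : V := o.getD x

lemma exp_some_some (a b : V) : (expansion G x).Adj (some a) (some b) ↔ G.Adj a b := by
  simp only [expansion, SimpleGraph.fromRel_adj]
  constructor
  · rintro ⟨_, (⟨c, d, h1, h2, h⟩ | ⟨c, h1, _⟩) | (⟨c, d, h1, h2, h⟩ | ⟨c, h1, _⟩)⟩
    · simp at h1 h2; subst h1 h2; exact h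
    · simp at h1
    · simp at h1 h2; subst h1 h2; exact h.symm
    · simp at h1
  · intro h
    exact ⟨by simpa using h.ne, Or.inl (Or.inl ⟨a, b, rfl, rfl, h⟩)⟩

lemma exp_none_some (b : V) : (expansion G x).Adj none (some b) ↔ b = x ∨ G.Adj x b := by
  simp only [expansion, SimpleGraph.fromRel_adj]
  constructor
  · rintro ⟨_, (⟨c, d, h1, h2, h⟩ | ⟨c, h1, h2, h⟩) | (⟨c, d, h1, h2, h⟩ | ⟨c, h1, h2, _⟩)⟩
    · simp at h1
    · simp at h2; subst h2; exact h
    · simp at h2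
    · simp at h2
  · intro h
    exact ⟨by simp, Or.inl (Or.inr ⟨b, by simp, rfl, h⟩)⟩

/-- the new edge -/
def isXY (e : Option V × Option V) : Prop := e = (some x, none) ∨ e = (none, some x)

lemma adj_fold (p q : Option V) (h : (expansion G x).Adj p q) (hxy : ¬ isXY x (p, q)) :
    G.Adj (fold x p) (fold x q) := by
  rcases p with _ | a <;> rcases q with _ | b
  · exact absurd h (SimpleGraph.irrefl _)
  · rw [exp_none_some] at h
    rcases h with rfl | h
    · exact absurd (Or.inr rfl) hxy
    · exact h
  · have h := h.symm
    rw [exp_none_some] at h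
    rcases h with rfl | h
    · exact absurd (Or.inl rfl) hxy
    · exact h.symm
  · rw [exp_some_some] at h; exact h

lemma adj_of_fold (p q : Option V) (h : G.Adj (fold x p) (fold x q)) : (expansion G x).Adj p q := by
  rcases p with _ | a <;> rcases q with _ | b
  · exact absurd h (SimpleGraph.irrefl _)
  · rw [exp_none_some]; exact Or.inr h
  · apply SimpleGraph.Adj.symm
    rw [exp_none_some]; exact Or.inr h.symm
  · rw [exp_some_some]; exact h

lemma NB_iff (z : Option V) : NB G x z ↔ G.Adj x (fold x z) := by
  rcases z with _ | a
  · simp [NB, fold]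
  · simp [NB, fold]

lemma cover (hg : Gapfree (expansion G x)) (a b : V) (h : G.Adj a b) : G.Adj x a ∨ G.Adj x b := by
  by_contra hcon
  push Not at hcon
  have ha : a ≠ x := by rintro rfl; exact hcon.2 h
  have hb : b ≠ x := by rintro rfl; exact hcon.1 h.symm
  have h1 : (expansion G x).Adj none (some x) := by rw [exp_none_some]; simp
  have h2 := (exp_some_some G x a b).2 h
  have key : ∀ p q : Option V, (p = none ∨ p = some x) → (q = some a ∨ q = some b) →
      ¬ (expansion G x).Adj p q := by
    rintro p q (rfl | rfl) (rfl | rfl) <;> simp [exp_none_some, exp_some_some, *]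
  obtain ⟨u, v, huv, ⟨p, hp, hp'⟩, ⟨q, hq, hq'⟩⟩ := hg none (some x) (some a) (some b) h1 h2 (by
    ext y
    simp only [Set.mem_inter_iff, Set.mem_insert_iff, Set.mem_singleton_iff, Set.mem_empty_iff_false, iff_false]
    rintro ⟨rfl | rfl, h | h⟩ <;> simp at h <;> first | exact ha h.symm | exact hb h.symm)
  simp only [Set.mem_insert_iff, Set.mem_singleton_iff] at hp hp' hq hq'
  have k1 := key p q hp' hq'
  have huv' := huv.symm
  have hpq : p ≠ q := by
    rintro rfl
    rcases hp' with rfl | rfl <;> rcases hq' with h | h <;> simp at h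
    · exact ha h.symm
    · exact hb h.symm
  rcases hp with rfl | rfl <;> rcases hq with rfl | rfl
  · exact hpq rfl
  · exact k1 huv
  · exact k1 huv'
  · exact hpq rfl

lemma endsM_map {A B : Type*} (g : A → B) (P : Multiset (A × A)) :
    endsM (P.map (Prod.map g g)) = (endsM P).map g := by
  simp [endsM]

/-- lifting -/
lemma lift_mem {s : ℕ} {u : Multiset (Option V)} (h : u.map (fold x) ∈ EPow G s) :
    u ∈ EPow (expansion G x) s := by
  obtain ⟨P, hP, hadj, hu⟩ := h
  induction s generalizing P u with
  | zero =>
    rw [Multiset.card_eq_zero] at hP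
    subst hP
    rw [endsM_zero] at hu
    have : u = 0 := Multiset.map_eq_zero.1 hu.symm
    exact ⟨0, by simp, by simp, by rw [endsM_zero, this]⟩
  | succ s ih =>
    obtain ⟨e, he⟩ : ∃ e, e ∈ P := Multiset.card_pos_iff_exists_mem.1 (by omega)
    obtain ⟨P, rfl⟩ := Multiset.exists_cons_of_mem he
    rw [endsM_cons] at hu
    obtain ⟨a, ha, hau, h1⟩ := Multiset.map_eq_cons _ _ _ _ |>.2 hu.symm
    obtain ⟨b, hb, hbu, h2⟩ := Multiset.map_eq_cons _ _ _ _ |>.2 h1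
    obtain ⟨P', hP', hadj', hu'⟩ := ih P (by simpa using hP)
      (fun e he => hadj e (Multiset.mem_cons_of_mem he)) h2.symm
    refine ⟨(a, b) ::ₘ P', by simp [hP'], ?_, ?_⟩
    · intro e' he'
      rcases Multiset.mem_cons.1 he' with rfl | he'
      · apply adj_of_fold
        simp only [hau, hbu]
        exact hadj e (Multiset.mem_cons_self _ _)
      · exact hadj' e' he'
    · rw [endsM_cons, hu', Multiset.cons_erase hb, Multiset.cons_erase ha]

/-- number of neighbours of `x` -/
noncomputable def nn (u : Multiset (Option V)) : ℕ := u.countP (NB G x)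

lemma nn_ge (hg : Gapfree (expansion G x)) {s : ℕ} {u : Multiset (Option V)}
    (h : u.map (fold x) ∈ EPow G s) : s ≤ nn G x u := by
  have h1 : nn G x u = (u.map (fold x)).countP (fun a => G.Adj x a) := by
    rw [nn, Multiset.countP_map, Multiset.countP_eq_card_filter]
    congr 1
    apply Multiset.filter_congr
    intro z _
    exact NB_iff G x z
  rw [h1]
  obtain ⟨P, rfl, hadj, hu⟩ := h
  rw [← hu]
  clear hu h1
  induction P using Multiset.induction_on with
  | empty => simp
  | cons e P ih =>
    have ih := ih (fun e he => hadj e (Multiset.mem_cons_of_mem he))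
    have := cover G x hg _ _ (hadj e (Multiset.mem_cons_self _ _))
    rw [endsM_cons, Multiset.countP_cons, Multiset.countP_cons, Multiset.card_cons]
    split_ifs <;> first | omega | tauto

/-- oriented edges of type one -/
def RR (z w : Option V) : Prop :=
  (NB G x z ∧ ¬ NB G x w ∧ (expansion G x).Adj z w) ∨ (z = some x ∧ w = none)

lemma adj_XY : (expansion G x).Adj (some x) none := by
  apply SimpleGraph.Adj.symm
  rw [exp_none_some]; simp

lemma RR_adj {z w : Option V} (h : RR G x z w) : (expansion G x).Adj z w := by
  rcases h with h | ⟨rfl, rfl⟩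
  · exact h.2.2
  · exact adj_XY G x

lemma not_NB_none : ¬ NB G x none := by simp [NB]
lemma not_NB_x : ¬ NB G x (some x) := by simp [NB]

lemma NB_adj_x {z : Option V} (h : NB G x z) : (expansion G x).Adj (some x) z := by
  obtain ⟨a, rfl, h⟩ := h
  rwa [exp_some_some]

lemma NB_adj_y {z : Option V} (h : NB G x z) : (expansion G x).Adj none z := by
  obtain ⟨a, rfl, h⟩ := h
  rw [exp_none_some]; exact Or.inr h

lemma dichotomy (hg : Gapfree (expansion G x)) {s : ℕ} {u : Multiset (Option V)} (n : ℕ) :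
    ∀ P : Multiset (Option V × Option V), P.card = s → (∀ e ∈ P, (expansion G x).Adj e.1 e.2) →
      endsM P = u → P.countP (isXY x) = n →
    (u.map (fold x) ∈ EPow G s ∨ ∃ P : Multiset (Option V × Option V), P.card = s ∧
      (∀ e ∈ P, RR G x e.1 e.2) ∧ (some x, none) ∈ P ∧ endsM P = u) := by
  induction n with
  | zero =>
    intro P hP hadj hu hn
    left
    refine ⟨P.map (Prod.map (fold x) (fold x)), by simpa, ?_, by rw [endsM_map, hu]⟩
    intro e he
    obtain ⟨e, he', rfl⟩ := Multiset.mem_map.1 he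
    exact adj_fold G x _ _ (hadj e he') (Multiset.countP_eq_zero.1 hn e he')
  | succ n ih =>
    intro P hP hadj hu hn
    obtain ⟨e0, he0, hxy⟩ : ∃ e ∈ P, isXY x e := Multiset.countP_pos.1 (by omega)
    by_cases hNN : ∃ e ∈ P, NB G x e.1 ∧ NB G x e.2
    · obtain ⟨e1, he1, h1, h2⟩ := hNN
      obtain ⟨P, rfl⟩ := Multiset.exists_cons_of_mem he0
      have hne : e1 ≠ e0 := by
        rintro rfl
        rcases hxy with rfl | rfl
        · exact not_NB_none G x h2
        · exact not_NB_none G x h1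
      rw [Multiset.mem_cons] at he1
      replace he1 := he1.resolve_left hne
      obtain ⟨P, rfl⟩ := Multiset.exists_cons_of_mem he1
      have hx1 : ¬ isXY x e1 := by
        rintro (rfl | rfl)
        · exact not_NB_none G x h2
        · exact not_NB_none G x h1
      have hx2 : ¬ isXY x (some x, e1.1) := by
        rintro (h | h)
        · simp at h; rw [h] at h1; exact not_NB_none G x h1
        · simp at h
      have hx3 : ¬ isXY x (none, e1.2) := by
        rintro (h | h)
        · simp at h
        · simp at h; rw [h] at h2; exact not_NB_x G x h2
      apply ih ((some x, e1.1) ::ₘ (none, e1.2) ::ₘ P)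
      · simpa using hP
      · intro e he
        rw [Multiset.mem_cons, Multiset.mem_cons] at he
        rcases he with rfl | rfl | he
        · exact NB_adj_x G x h1
        · exact NB_adj_y G x h2
        · exact hadj e (by simp [he])
      · rw [← hu]
        simp only [endsM_cons]
        rcases hxy with rfl | rfl <;> ext t <;> simp only [Multiset.count_cons] <;> omega
      · rw [Multiset.countP_cons_of_pos _ hxy, Multiset.countP_cons_of_neg _ hx1] at hn
        rw [Multiset.countP_cons_of_neg _ hx2, Multiset.countP_cons_of_neg _ hx3]
        omega
    · right
      push Not at hNN
      have hcases : ∀ e ∈ P, isXY x e ∨ NB G x e.1 ∨ NB G x e.2 := by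
        intro e he
        by_cases hx : isXY x e
        · exact Or.inl hx
        · right
          rw [NB_iff, NB_iff]
          exact cover G x hg _ _ (adj_fold G x _ _ (hadj e he) hx)
      set g : Option V × Option V → Option V × Option V := fun e =>
        if NB G x e.1 then e else if NB G x e.2 then e.swap else (some x, none) with hgdef
      have hxyg : ∀ e, isXY x e → g e = (some x, none) := by
        rintro e (rfl | rfl) <;> simp [hgdef, not_NB_none, not_NB_x]
      refine ⟨P.map g, by simpa, ?_, ?_, ?_⟩
      · intro e he
        obtain ⟨e, he', rfl⟩ := Multiset.mem_map.1 he
        have ha := hadj e he'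
        have hN := hNN e he'
        simp only [hgdef]
        split_ifs with h1 h2
        · exact Or.inl ⟨h1, hN h1, ha⟩
        · exact Or.inl ⟨h2, h1, ha.symm⟩
        · exact Or.inr ⟨rfl, rfl⟩
      · exact Multiset.mem_map.2 ⟨e0, he0, hxyg _ hxy⟩
      · rw [← hu]
        clear hP hadj hu hn he0 hNN
        induction P using Multiset.induction_on with
        | empty => simp
        | cons e P ih =>
          rw [Multiset.map_cons, endsM_cons, endsM_cons,
            ih (fun e he => hcases e (Multiset.mem_cons_of_mem he))]
          rcases hcases e (Multiset.mem_cons_self _ _) with h | h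
          · rw [hxyg e h]
            rcases h with rfl | rfl
            · rfl
            · rw [Multiset.cons_swap]
          · simp only [hgdef]
            split_ifs with h1 h2
            · rfl
            · rw [Multiset.cons_swap]; rfl
            · tauto

lemma RR_fst (P : Multiset (Option V × Option V)) (hP : ∀ e ∈ P, RR G x e.1 e.2) :
    P.map Prod.fst = (endsM P).filter (NB G x) +
      Multiset.replicate (P.count (some x, none)) (some x) := by
  induction P using Multiset.induction_on with
  | empty => simp [endsM]
  | cons e P ih =>
    have ih := ih (fun e he => hP e (Multiset.mem_cons_of_mem he))
    rw [endsM_cons, Multiset.map_cons, ih]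
    rcases hP e (Multiset.mem_cons_self _ _) with ⟨h1, h2, _⟩ | ⟨h1, h2⟩
    · have hne : (some x, none) ≠ e := by
        rintro rfl; exact not_NB_x G x h1
      rw [Multiset.filter_cons_of_pos _ h1, Multiset.filter_cons_of_neg _ h2,
        Multiset.count_cons_of_ne hne, Multiset.cons_add]
    · have : e = (some x, none) := Prod.ext h1 h2
      subst this
      rw [Multiset.filter_cons_of_neg _ (not_NB_x G x), Multiset.filter_cons_of_neg _ (not_NB_none G x),
        Multiset.count_cons_self, Multiset.replicate_succ, Multiset.add_cons]

lemma RR_card (P : Multiset (Option V × Option V)) (hP : ∀ e ∈ P, RR G x e.1 e.2) :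
    P.card = nn G x (endsM P) + P.count (some x, none) := by
  have := congrArg Multiset.card (RR_fst G x P hP)
  simpa [nn, Multiset.countP_eq_card_filter] using this

lemma fold_count_lt {u v : Multiset (Option V)} {t : V}
    (h : (u.map (fold x)).count t < (v.map (fold x)).count t) :
    ∃ t', fold x t' = t ∧ u.count t' < v.count t' := by
  by_contra hcon
  push Not at hcon
  apply absurd h
  rw [not_lt, Multiset.count_map, Multiset.count_map]
  apply Multiset.card_le_card
  rw [Multiset.le_iff_count]
  intro e
  rw [Multiset.count_filter, Multiset.count_filter]
  split_ifs with he
  · exact hcon e he.symm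
  · exact le_rfl

lemma fold_count_eq {u v : Multiset (Option V)} {t' : Option V}
    (h : u.map (fold x) = v.map (fold x)) (ht : u.count t' < v.count t') :
    ∃ p, fold x p = fold x t' ∧ v.count p < u.count p := by
  by_contra hcon
  push Not at hcon
  have h1 : u.filter (fun a => fold x t' = fold x a) ≤ v.filter (fun a => fold x t' = fold x a) := by
    rw [Multiset.le_iff_count]
    intro e
    rw [Multiset.count_filter, Multiset.count_filter]
    split_ifs with he
    · exact hcon e he.symm
    · exact le_rfl
  have h2 := congrArg (Multiset.count (fold x t')) h
  rw [Multiset.count_map, Multiset.count_map] at h2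
  have h3 := Multiset.eq_of_le_of_card_le h1 h2.ge
  have h4 := congrArg (Multiset.count t') h3
  rw [Multiset.count_filter, Multiset.count_filter, if_pos rfl, if_pos rfl] at h4
  omega

lemma main_CLQ (hg : Gapfree (expansion G x)) (s : ℕ) (ρ : Multiset V → ℕ)
    (h : CLQ (EPow G s) ρ) {α : Type*} [LinearOrder α] (g : Multiset (Option V) → α)
    (hginj : Function.Injective g)
    (hlex : ∀ u v, g v < g u → ∃ t, u.count t < v.count t ∧
      ∀ p ∈ u, v.count p < u.count p → g (t ::ₘ u.erase p) < g u) :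
    CLQ (EPow (expansion G x) s) (fun u : Multiset (Option V) =>
      (toLex (s - nn G x u, toLex (if s ≤ nn G x u then ρ (u.map (fold x)) else 0, g u)) :
        ℕ ×ₗ ℕ ×ₗ α)) := by
  constructor
  · intro u _ v _ huv
    have h1 := toLex.injective huv
    have h2 := toLex.injective (Prod.ext_iff.1 h1).2
    exact hginj (Prod.ext_iff.1 h2).2
  intro u hu v hv hlt
  have dich : ∀ u ∈ EPow (expansion G x) s, (s ≤ nn G x u ∧ u.map (fold x) ∈ EPow G s) ∨
      (nn G x u < s ∧ ∃ P : Multiset (Option V × Option V), P.card = s ∧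
      (∀ e ∈ P, RR G x e.1 e.2) ∧ (some x, none) ∈ P ∧ endsM P = u) := by
    rintro u ⟨P, hP, hadj, hPu⟩
    rcases dichotomy G x hg _ P hP hadj hPu rfl with h | ⟨Q, h1, h2, h3, h4⟩
    · exact Or.inl ⟨nn_ge G x hg h, h⟩
    · right
      refine ⟨?_, Q, h1, h2, h3, h4⟩
      have := RR_card G x Q h2
      rw [h4] at this
      have := Multiset.count_pos.2 h3
      omega
  simp only [Prod.Lex.toLex_lt_toLex] at hlt ⊢
  rcases dich u hu with ⟨hnu, hπu⟩ | ⟨hnu, P, hPc, hPR, hPxy, hPu⟩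
  · -- level zero
    have hnv : s ≤ nn G x v := by omega
    have hπv : v.map (fold x) ∈ EPow G s := by
      rcases dich v hv with h | h
      · exact h.2
      · omega
    simp only [hnu, hnv, if_true] at hlt
    have hlt' : ρ (v.map (fold x)) < ρ (u.map (fold x)) ∨
        ρ (v.map (fold x)) = ρ (u.map (fold x)) ∧ g v < g u := by
      rcases hlt with h | h
      · omega
      · exact h.2
    rcases hlt' with hρ | ⟨hρ, hgl⟩
    · obtain ⟨t, ht, w, hw, hwρ, hwle⟩ := h.2 _ hπu _ hπv hρ
      obtain ⟨p, hp, hpt, rfl⟩ := exists_erase hwle (by rw [card_EPow hw, card_EPow hπu])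
        (by rintro rfl; exact lt_irrefl _ hwρ)
      obtain ⟨t', rfl, ht'⟩ := fold_count_lt x ht
      obtain ⟨p', hp', rfl⟩ := Multiset.mem_map.1 hp
      have hπ : (t' ::ₘ u.erase p').map (fold x) = fold x t' ::ₘ (u.map (fold x)).erase (fold x p') := by
        rw [Multiset.map_cons]
        congr 1
        conv_rhs => rw [← Multiset.cons_erase hp', Multiset.map_cons, Multiset.erase_cons_head]
      rw [← hπ] at hw hwρ
      refine ⟨t', ht', _, lift_mem G x hw, ?_, Multiset.cons_le_cons _ (Multiset.erase_le _ _)⟩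
      have hnw := nn_ge G x hg hw
      right
      refine ⟨by omega, Or.inl ?_⟩
      simpa only [hnw, hnu, if_true] using hwρ
    · have hπ := h.1 hπv hπu hρ
      obtain ⟨t', ht', hall⟩ := hlex u v hgl
      obtain ⟨p, hpt, hp⟩ := fold_count_eq x hπ.symm ht'
      have hpu : p ∈ u := Multiset.count_pos.1 (by omega)
      have hπw : (t' ::ₘ u.erase p).map (fold x) = u.map (fold x) := by
        conv_rhs => rw [← Multiset.cons_erase hpu, Multiset.map_cons, hpt]
        rw [Multiset.map_cons]
      have hw : (t' ::ₘ u.erase p).map (fold x) ∈ EPow G s := by rw [hπw]; exact hπu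
      refine ⟨t', ht', _, lift_mem G x hw, ?_, Multiset.cons_le_cons _ (Multiset.erase_le _ _)⟩
      have hnw := nn_ge G x hg hw
      right
      refine ⟨by omega, Or.inr ⟨?_, hall p hpu hp⟩⟩
      rw [if_pos hnw, if_pos hnu, hπw]
  · by_cases hz : ∃ z, NB G x z ∧ u.count z < v.count z
    · obtain ⟨z, hz, hzc⟩ := hz
      obtain ⟨P0, rfl⟩ := Multiset.exists_cons_of_mem hPxy
      rw [endsM_cons] at hPu
      simp only at hPu
      refine ⟨z, hzc, endsM ((z, none) ::ₘ P0), ⟨(z, none) ::ₘ P0, by simpa using hPc, ?_, rfl⟩, ?_, ?_⟩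
      · intro e he
        rcases Multiset.mem_cons.1 he with rfl | he
        · exact (NB_adj_y G x hz).symm
        · exact RR_adj G x (hPR e (Multiset.mem_cons_of_mem he))
      · left
        have : nn G x (endsM ((z, none) ::ₘ P0)) = nn G x u + 1 := by
          rw [endsM_cons, ← hPu]
          simp only [nn]
          rw [Multiset.countP_cons_of_pos _ hz, Multiset.countP_cons_of_neg _ (not_NB_x G x)]
        omega
      · rw [endsM_cons, ← hPu]
        exact Multiset.cons_le_cons _ (Multiset.le_cons_self _ _)
    · push Not at hz
      have hnv : nn G x u ≤ nn G x v := by omega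
      have hle : v.filter (NB G x) ≤ u.filter (NB G x) := by
        rw [Multiset.le_iff_count]
        intro e
        rw [Multiset.count_filter, Multiset.count_filter]
        split_ifs with he
        · exact hz e he
        · exact le_rfl
      have hfeq : v.filter (NB G x) = u.filter (NB G x) := by
        apply Multiset.eq_of_le_of_card_le hle
        rw [← Multiset.countP_eq_card_filter, ← Multiset.countP_eq_card_filter]
        exact hnv
      have hneq : nn G x v = nn G x u := by
        simp only [nn, Multiset.countP_eq_card_filter, hfeq]
      rcases dich v hv with ⟨h1, _⟩ | ⟨_, Q, hQc, hQR, hQxy, hQv⟩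
      · omega
      have hgl : g v < g u := by
        rw [hneq, if_neg (by omega), if_neg (by omega)] at hlt
        simpa using hlt
      obtain ⟨t, ht, hall⟩ := hlex u v hgl
      have hPcd := RR_card G x P hPR
      have hQcd := RR_card G x Q hQR
      have hPf := RR_fst G x P hPR
      have hQf := RR_fst G x Q hQR
      rw [hPu] at hPcd hPf
      rw [hQv] at hQcd hQf
      have hcc : P.count (some x, none) = Q.count (some x, none) := by omega
      have hfst : P.map Prod.fst = Q.map Prod.fst := by rw [hPf, hQf, hfeq, hcc]
      obtain ⟨T, hT1, hT2⟩ := triples P Q hfst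
      have hs1 : T.map (fun e => e.2.1) = P.map Prod.snd := by rw [← hT1, Multiset.map_map]; rfl
      have hs2 : T.map (fun e => e.2.2) = Q.map Prod.snd := by rw [← hT2, Multiset.map_map]; rfl
      have hs0 : T.map Prod.fst = P.map Prod.fst := by rw [← hT1, Multiset.map_map]; rfl
      have hcu : ∀ y, u.count y = (P.map Prod.fst).count y + (P.map Prod.snd).count y := by
        intro y; rw [← hPu, endsM, Multiset.count_add]
      have hcv : ∀ y, v.count y = (P.map Prod.fst).count y + (Q.map Prod.snd).count y := by
        intro y; rw [← hQv, endsM, Multiset.count_add, hfst]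
      obtain ⟨p, P', hP'R, hP'f, hP's, hpc⟩ := exchange (RR G x) T.card T t rfl (by
          intro e he
          constructor
          · have := hPR (e.1, e.2.1) (by rw [← hT1]; exact Multiset.mem_map_of_mem _ he)
            exact this
          · have := hQR (e.1, e.2.2) (by rw [← hT2]; exact Multiset.mem_map_of_mem _ he)
            exact this) (by
          rw [hs1, hs2]
          have := hcu t
          have := hcv t
          omega)
      rw [hs1, hs2] at hpc
      rw [hs1] at hP's
      rw [hs0] at hP'f
      have hpv : v.count p < u.count p := by
        rw [hcu, hcv]; omega
      have hpu : p ∈ u := Multiset.count_pos.1 (by omega)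
      have hWeq : p ::ₘ endsM P' = t ::ₘ u := by
        rw [endsM, hP'f, ← Multiset.add_cons, hP's, Multiset.add_cons, ← hPu, endsM]
      have hpt : p ≠ t := by rintro rfl; omega
      have hW : endsM P' = t ::ₘ u.erase p := by
        have := congrArg (fun m => Multiset.erase m p) hWeq
        simp only [Multiset.erase_cons_head] at this
        rw [this, Multiset.erase_cons_tail _ (Ne.symm hpt)]
      have hP'c : P'.card = s := by
        have := congrArg Multiset.card hP'f
        simp only [Multiset.card_map] at this
        omega
      refine ⟨t, ht, endsM P', ⟨P', hP'c, fun e he => RR_adj G x (hP'R e he), rfl⟩, ?_, ?_⟩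
      · have hgW := hall p hpu hpv
        rw [← hW] at hgW
        have hnW : nn G x u ≤ nn G x (endsM P') := by
          have hnt : ¬ NB G x p := by
            intro hh
            have := congrArg (Multiset.count p) hfeq
            rw [Multiset.count_filter, Multiset.count_filter, if_pos hh, if_pos hh] at this
            omega
          have := congrArg (Multiset.countP (NB G x)) hWeq
          rw [Multiset.countP_cons_of_neg _ hnt, Multiset.countP_cons] at this
          simp only [nn]
          omega
        rcases hnW.lt_or_eq with hh | hh
        · left; omega
        · right
          refine ⟨by omega, Or.inr ⟨?_, hgW⟩⟩
          rw [if_neg (by omega), if_neg (by omega)]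
      · rw [hW]
        exact Multiset.cons_le_cons _ (Multiset.erase_le _ _)

lemma finite_exp (s : ℕ) (hs : 1 ≤ s) (hfin : (EPow G s).Finite) :
    (EPow (expansion G x) s).Finite := by
  set A : Finset V := insert x (hfin.toFinset.biUnion (fun u => u.toFinset)) with hA
  have hmem : ∀ a b, G.Adj a b → a ∈ A := by
    intro a b hab
    rw [hA, Finset.mem_insert, Finset.mem_biUnion]
    right
    refine ⟨endsM (Multiset.replicate s (a,b)), ?_, ?_⟩
    · rw [Set.Finite.mem_toFinset]
      refine ⟨_, by simp, ?_, rfl⟩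
      intro e he
      rw [Multiset.eq_of_mem_replicate he]; exact hab
    · have hs0 : s ≠ 0 := by omega
      simp [endsM, hs0]
  set B : Finset (Option V) := insert none (A.image some) with hB
  have hmemB : ∀ p q, (expansion G x).Adj p q → p ∈ B := by
    intro p q hpq
    rcases p with _ | a
    · simp [hB]
    · suffices a ∈ A by simp [hB, this]
      rcases q with _ | b
      · have := hpq.symm
        rw [exp_none_some] at this
        rcases this with rfl | h
        · simp [hA]
        · exact hmem _ _ h.symm
      · rw [exp_some_some] at hpq
        exact hmem _ _ hpq
  refine (Set.finite_Iic ((2 * s) • B.val)).subset ?_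
  intro u hu
  have hc := card_EPow hu
  obtain ⟨P, hP, hadj, rfl⟩ := hu
  rw [Set.mem_Iic, Multiset.le_iff_count]
  intro t
  by_cases ht : t ∈ endsM P
  · have htB : t ∈ B := by
      rw [endsM, Multiset.mem_add, Multiset.mem_map, Multiset.mem_map] at ht
      rcases ht with ⟨e, he, rfl⟩ | ⟨e, he, rfl⟩
      · exact hmemB _ _ (hadj e he)
      · exact hmemB _ _ (hadj e he).symm
    rw [Multiset.count_nsmul, Multiset.count_eq_one_of_mem B.nodup htB, mul_one, ← hc]
    exact Multiset.count_le_card _ _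
  · rw [Multiset.count_eq_zero_of_notMem ht]
    exact Nat.zero_le _

end expansion

/-- if `I(G)^s` has linear quotients for some `s ≥ 1` and `x ∈ V(G)`,
then `I(G^[x])^s` has linear quotients iff the expansion `G^[x]` is gapfree. -/
theorem stmt6 {K : Type*} [Field K] {V : Type*} (G : SimpleGraph V) (x : V)
    (s : ℕ) (hs : 1 ≤ s) (h : HasLinearQuotients ((edgeIdeal K G) ^ s)) :
    HasLinearQuotients ((edgeIdeal K (expansion G x)) ^ s) ↔ Gapfree (expansion G x) := by
  classical
  constructor
  · intro h'
    obtain ⟨_, f, hf⟩ := CLQ_of_HasLinearQuotients _ _ h'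
    exact gapfree_of_CLQ _ s hs f (by convert hf)
  · intro hg
    obtain ⟨hfin, ρ, hρ⟩ := CLQ_of_HasLinearQuotients _ _ h
    obtain ⟨α, _, g, hginj, hlex⟩ := lexrank (W := Option V)
    have hmain := main_CLQ G x hg s ρ (by convert hρ) g hginj (by convert hlex)
    exact HasLinearQuotients_of_CLQ _ _ (finite_exp G x s hs hfin) _ (by convert hmain)
end

section
/- For every integer q ≥ 2, the q-th power of the edge ideal of the 5-cycle, I(C_5)^q ⊆ K[a,b,c,d,e], has linear quotients. -/
open MvPolynomial

/-- The 5-cycle on `Fin 5`. -/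
def cycle5 : SimpleGraph (Fin 5) :=
  SimpleGraph.fromRel (fun i j => j = i + 1)


/-- exponent vectors of the generators of the `q`-th power -/
def Gd (q : ℤ) (v : Fin 5 → ℤ) : Prop :=
  v 0 + v 1 + v 2 + v 3 + v 4 = 2 * q ∧ v 0 + v 2 ≤ q ∧ v 1 + v 3 ≤ q ∧ v 2 + v 4 ≤ q ∧
    v 3 + v 0 ≤ q ∧ v 4 + v 1 ≤ q

/-- raise `i`, lower `j` -/
def mv (w : Fin 5 → ℤ) (i j : Fin 5) : Fin 5 → ℤ :=
  fun x => w x + (if x = i then 1 else 0) - (if x = j then 1 else 0)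

def kQ (v : Fin 5 → ℤ) : ℤ := v 0 ^ 2 + v 1 ^ 2 + v 2 ^ 2 + v 3 ^ 2 + v 4 ^ 2
def kK (v : Fin 5 → ℤ) : ℤ := - ∑ z : Fin 5, if v z = 0 then v (z + 2) + v (z + 3) else 0
def kC (v : Fin 5 → ℤ) : ℤ := v 0 + 2 * v 1 + 4 * v 2 + 8 * v 3 + 16 * v 4

/-- the ranking key -/
def rho (v : Fin 5 → ℤ) : ℤ ×ₗ (ℤ ×ₗ ℤ) := toLex (kQ v, toLex (kK v, kC v))

lemma rho_le {u w : Fin 5 → ℤ} : rho u ≤ rho w ↔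
    kQ u < kQ w ∨ (kQ u = kQ w ∧ (kK u < kK w ∨ (kK u = kK w ∧ kC u ≤ kC w))) := by
  simp [rho, Prod.Lex.le_iff]

lemma kQ_mv (w : Fin 5 → ℤ) (i j : Fin 5) (h : i ≠ j) :
    kQ (mv w i j) = kQ w + 2 * (w i - w j) + 2 := by
  fin_cases i <;> fin_cases j <;> first | (exact absurd rfl h) | (simp [kQ, mv]; ring)

lemma kC_mv (w : Fin 5 → ℤ) (i j : Fin 5) :
    kC (mv w i j) = kC w + 2 ^ (i : ℕ) - 2 ^ (j : ℕ) := by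
  fin_cases i <;> fin_cases j <;> simp [kC, mv] <;> ring

lemma kK_of (v : Fin 5 → ℤ) (z : Fin 5) (h : ∀ x, x ≠ z → v x ≠ 0) :
    kK v = if v z = 0 then - (v (z + 2) + v (z + 3)) else 0 := by
  unfold kK
  rw [Finset.sum_eq_single z]
  · split_ifs <;> simp
  · intro b _ hb
    rw [if_neg (h b hb)]
  · simp

lemma Gd_mv1 {q : ℤ} {w : Fin 5 → ℤ} (hw : Gd q w) (i : Fin 5)
    (h2 : w i + w (i + 2) < q) (h3 : w i + w (i + 3) < q) (j : Fin 5) : Gd q (mv w i j) := by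
  unfold Gd at *
  fin_cases i <;> fin_cases j <;> simp [mv] at * <;> omega

lemma Gd_mv2 {q : ℤ} {w : Fin 5 → ℤ} (hw : Gd q w) (i : Fin 5)
    (h3 : w i + w (i + 3) < q) : Gd q (mv w i (i + 2)) := by
  unfold Gd at *
  fin_cases i <;> simp [mv] at * <;> omega

lemma Gd_mv3 {q : ℤ} {w : Fin 5 → ℤ} (hw : Gd q w) (i : Fin 5)
    (h3 : w i + w (i + 2) < q) : Gd q (mv w i (i + 3)) := by
  unfold Gd at *
  fin_cases i <;> simp [mv] at * <;> omega

lemma transport {ι : Type*} [Fintype ι] [DecidableEq ι] (w : ι → ℤ) (B : Set ι) (τ : ι → ι)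
    (hτ : Set.InjOn τ B) : ∀ (n : ℕ) (δ : ι → ℤ), (Finset.univ.filter fun i => 0 < δ i).card ≤ n →
      ∑ i, δ i = 0 →
      (∀ i, 0 < δ i → (∀ j, δ j < 0 → w j ≤ w i + 1) ∨
        (i ∈ B ∧ δ (τ i) + δ i ≤ 0 ∧ w (τ i) ≤ w i + 1)) →
      0 ≤ ∑ i, (w i * δ i + max (δ i) 0) := by
  intro n
  induction n with
  | zero =>
    intro δ hc hs _
    have h1 : ∀ i, δ i ≤ 0 := by
      intro i
      by_contra hi
      have : i ∈ Finset.univ.filter fun i => 0 < δ i := by simp; omega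
      have := Finset.card_pos.mpr ⟨i, this⟩
      omega
    have h2 : ∀ i, δ i = 0 := by
      intro i
      have := (Finset.sum_eq_zero_iff_of_nonpos (fun i _ => h1 i)).mp hs
      exact this i (Finset.mem_univ i)
    simp [h2]
  | succ n ih =>
    intro δ hc hs H
    by_cases hall : ∀ i, 0 < δ i → (∀ j, δ j < 0 → w j ≤ w i + 1)
    · by_cases hP : (Finset.univ.filter fun i => 0 < δ i).Nonempty
      · obtain ⟨i₀, hi₀, hmin⟩ := Finset.exists_min_image _ w hP
        simp only [Finset.mem_filter, Finset.mem_univ, true_and] at hi₀ hmin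
        have e : ∑ i, (w i * δ i + max (δ i) 0) =
            ∑ i, ((w i - w i₀ - 1) * δ i + max (δ i) 0) := by
          have : ∑ i, ((w i - w i₀ - 1) * δ i + max (δ i) 0) =
            ∑ i, (w i * δ i + max (δ i) 0) - (w i₀ + 1) * ∑ i, δ i := by
            rw [Finset.mul_sum, ← Finset.sum_sub_distrib]
            exact Finset.sum_congr rfl fun i _ => by ring
          rw [this, hs]; ring
        rw [e]
        refine Finset.sum_nonneg fun i _ => ?_
        rcases lt_trichotomy (δ i) 0 with h | h | h
        · have := hall i₀ hi₀ i h
          rw [max_eq_right h.le]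
          nlinarith
        · simp [h]
        · have := hmin i h
          rw [max_eq_left h.le]
          nlinarith
      · apply ih δ _ hs H
        rw [Finset.not_nonempty_iff_eq_empty] at hP
        simp [hP]
    · push Not at hall
      obtain ⟨i, hi, j', hj', hj''⟩ := hall
      have hB : i ∈ B ∧ δ (τ i) + δ i ≤ 0 ∧ w (τ i) ≤ w i + 1 := by
        rcases H i hi with h | h
        · have := h j' hj'; omega
        · exact h
      obtain ⟨hB, hle, hw⟩ := hB
      have hne : τ i ≠ i := by
        intro h; rw [h] at hle; omega
      set δ' : ι → ℤ := fun x => δ x - (if x = i then δ i else 0) + (if x = τ i then δ i else 0)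
        with hδ'
      have d1 : δ' i = 0 := by simp [hδ', hne.symm]
      have d2 : δ' (τ i) = δ (τ i) + δ i := by simp [hδ', hne]
      have d3 : ∀ x, x ≠ i → x ≠ τ i → δ' x = δ x := by
        intro x h1 h2; simp [hδ', h1, h2]
      have hpos : ∀ x, 0 < δ' x → x ≠ i ∧ x ≠ τ i ∧ δ' x = δ x := by
        intro x hx
        have h1 : x ≠ i := by rintro rfl; omega
        have h2 : x ≠ τ i := by rintro rfl; omega
        exact ⟨h1, h2, d3 x h1 h2⟩
      have key := ih δ' ?_ ?_ ?_
      · have e : ∑ x, (w x * δ x + max (δ x) 0) - ∑ x, (w x * δ' x + max (δ' x) 0) =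
            (w i - w (τ i) + 1) * δ i := by
          rw [← Finset.sum_sub_distrib]
          have : ∀ x, (w x * δ x + max (δ x) 0) - (w x * δ' x + max (δ' x) 0) =
            (if x = i then (w i + 1) * δ i else 0) - (if x = τ i then w (τ i) * δ i else 0) := by
            intro x
            by_cases h1 : x = i
            · subst h1; rw [d1, max_eq_left hi.le]; simp [hne.symm]; ring
            · by_cases h2 : x = τ i
              · subst h2; rw [d2, max_eq_right (by omega), max_eq_right (by omega)]
                simp [hne]; ring
              · rw [d3 x h1 h2]; simp [h1, h2]
          rw [Finset.sum_congr rfl fun x _ => this x, Finset.sum_sub_distrib]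
          simp; ring
        nlinarith
      · have : (Finset.univ.filter fun x => 0 < δ' x) ⊂ Finset.univ.filter fun x => 0 < δ x := by
          rw [Finset.ssubset_iff_of_subset]
          · exact ⟨i, by simp [hi], by simp [d1]⟩
          · intro x hx
            simp only [Finset.mem_filter, Finset.mem_univ, true_and] at hx ⊢
            have := (hpos x hx).2.2
            omega
        have := Finset.card_lt_card this
        omega
      · simp [hδ', Finset.sum_add_distrib, Finset.sum_sub_distrib, hs]
      · intro x hx
        obtain ⟨h1, h2, h3⟩ := hpos x hx
        rcases H x (by omega) with h | ⟨a, b, c⟩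
        · left
          intro y hy
          apply h
          by_cases g1 : y = i
          · subst g1; omega
          by_cases g2 : y = τ i
          · subst g2; omega
          rwa [d3 y g1 g2] at hy
        · right
          refine ⟨a, ?_, c⟩
          have g1 : τ x ≠ i := by
            intro g; rw [g] at b; omega
          have g2 : τ x ≠ τ i := fun g => h1 (hτ a hB g)
          rw [d3 _ g1 g2]; omega

lemma c1 {q : ℤ} {w u : Fin 5 → ℤ} (hw : Gd q w) (hu : Gd q u) (hq : 2 ≤ q)
    (NM : ∀ i j, i ≠ j → w i < u i → Gd q (mv w i j) → w j ≤ w i + 1) (i : Fin 5)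
    (hi : w i < u i) : (∀ j, w j ≤ w i + 1) ∨
      (w i + w (i + 2) = q ∧ w (i + 2) ≤ w i + 1 ∧ u (i + 2) + u i ≤ w (i + 2) + w i) ∨
      (w i + w (i + 3) = q ∧ w (i + 3) ≤ w i + 1 ∧ u (i + 3) + u i ≤ w (i + 3) + w i) := by
  have a2 := fun h => NM i (i + 2) (by clear * -; revert i; decide) hi (Gd_mv2 hw i h)
  have a3 := fun h => NM i (i + 3) (by clear * -; revert i; decide) hi (Gd_mv3 hw i h)
  have a1 := fun h h' => NM i (i + 1) (by clear * -; revert i; decide) hi (Gd_mv1 hw i h h' _)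
  have a4 := fun h h' => NM i (i + 4) (by clear * -; revert i; decide) hi (Gd_mv1 hw i h h' _)
  have b := fun hi h => NM (i + 1) (i + 1 + 2) (by clear * -; revert i; decide) hi (Gd_mv2 hw (i + 1) h)
  have c := fun hi h => NM (i + 4) (i + 4 + 3) (by clear * -; revert i; decide) hi (Gd_mv3 hw (i + 4) h)
  have hj : (w (i + 1) ≤ w i + 1 ∧ w (i + 2) ≤ w i + 1 ∧ w (i + 3) ≤ w i + 1 ∧ w (i + 4) ≤ w i + 1)
      → ∀ j, w j ≤ w i + 1 := by
    rintro ⟨h1, h2, h3, h4⟩ j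
    have : j = i ∨ j = i + 1 ∨ j = i + 2 ∨ j = i + 3 ∨ j = i + 4 := by clear * -; revert i j; decide
    rcases this with rfl | rfl | rfl | rfl | rfl
    · omega
    all_goals assumption
  rw [show i + 1 + 2 = i + 3 by clear * -; revert i; decide, show i + 1 + 3 = i + 4 by clear * -; revert i; decide] at b
  rw [show i + 4 + 3 = i + 2 by clear * -; revert i; decide, show i + 4 + 2 = i + 1 by clear * -; revert i; decide] at c
  have hw' : w i + w (i + 1) + w (i + 2) + w (i + 3) + w (i + 4) = 2 * q ∧ w i + w (i + 2) ≤ q ∧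
    w (i + 1) + w (i + 3) ≤ q ∧ w (i + 2) + w (i + 4) ≤ q ∧ w (i + 3) + w i ≤ q ∧
    w (i + 4) + w (i + 1) ≤ q := by
    unfold Gd at hw
    clear * - hw
    fin_cases i <;> simp <;> omega
  have hu' : u i + u (i + 1) + u (i + 2) + u (i + 3) + u (i + 4) = 2 * q ∧ u i + u (i + 2) ≤ q ∧
    u (i + 1) + u (i + 3) ≤ q ∧ u (i + 2) + u (i + 4) ≤ q ∧ u (i + 3) + u i ≤ q ∧
    u (i + 4) + u (i + 1) ≤ q := by
    unfold Gd at hu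
    clear * - hu
    fin_cases i <;> simp <;> omega
  by_cases f : (w (i + 1) ≤ w i + 1 ∧ w (i + 2) ≤ w i + 1 ∧ w (i + 3) ≤ w i + 1 ∧
    w (i + 4) ≤ w i + 1)
  · exact Or.inl (hj f)
  right
  clear hj NM hw hu
  generalize w (i + 1) = w1 at *
  generalize w (i + 2) = w2 at *
  generalize w (i + 3) = w3 at *
  generalize w (i + 4) = w4 at *
  generalize w i = w0 at *
  generalize u (i + 1) = u1 at *
  generalize u (i + 2) = u2 at *
  generalize u (i + 3) = u3 at *
  generalize u (i + 4) = u4 at *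
  generalize u i = u0 at *
  by_cases e2 : w0 + w2 < q <;> by_cases e3 : w0 + w3 < q
  · exact absurd ⟨a1 e2 e3, a2 e3, a3 e2, a4 e2 e3⟩ f
  · right
    have := a3 e2
    clear a1 a2 a3 a4 b c f
    omega
  · left
    have := a2 e3
    clear a1 a2 a3 a4 b c f
    omega
  · exfalso
    clear a1 a2 a3 a4
    obtain ⟨x1, x2, x3, x4, x5, x6⟩ := hw'
    obtain ⟨y1, y2, y3, y4, y5, y6⟩ := hu'
    have z2 : w0 + w2 = q := by omega
    have z3 : w0 + w3 = q := by omega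
    have z4 : w1 + w4 = w0 := by omega
    have z5 : 0 ≤ w4 := by omega
    have z6 : 0 ≤ w1 := by omega
    have z7 : w0 + 1 < w2 := by
      by_contra h
      exact f ⟨by omega, by omega, by omega, by omega⟩
    clear f
    by_cases g1 : w1 < u1
    · have := b g1 (by omega)
      omega
    · have := c (by omega) (by omega)
      omega

lemma c2 {q : ℤ} {w : Fin 5 → ℤ} (hw : Gd q w) (i k : Fin 5) (hik : i ≠ k)
    (t s : Fin 5) (ht : t = i + 2 ∨ t = i + 3) (hs : s = k + 2 ∨ s = k + 3) (hst : t = s)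
    (hi : w i + w t = q) (hk : w k + w s = q) (hi' : w t ≤ w i + 1) :
    ∀ j, w j ≤ w i + 1 := by
  subst hst
  have : (t = i + 2 ∧ k = i + 4) ∨ (t = i + 3 ∧ k = i + 1) := by
    clear * - ht hs hik; revert i k t; decide
  unfold Gd at hw
  clear hs
  rcases this with ⟨rfl, rfl⟩ | ⟨rfl, rfl⟩ <;> intro j <;> fin_cases i <;> fin_cases j <;>
    simp at * <;> omega

lemma trans_core {q : ℤ} {w u : Fin 5 → ℤ} (hw : Gd q w) (hu : Gd q u) (hq : 2 ≤ q)
    (NM : ∀ i j, i ≠ j → w i < u i → Gd q (mv w i j) → w j ≤ w i + 1) :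
    0 ≤ ∑ i, (w i * (u i - w i) + max (u i - w i) 0) := by
  classical
  have C := fun i hi => c1 hw hu hq NM i hi
  let B : Set (Fin 5) := {i | w i < u i ∧ ¬ ∀ j, w j ≤ w i + 1}
  have C' : ∀ i, ∃ t, i ∈ B → ((t = i + 2 ∨ t = i + 3) ∧ w i + w t = q ∧ w t ≤ w i + 1 ∧
      u t + u i ≤ w t + w i) := by
    intro i
    by_cases hi : i ∈ B
    · rcases C i hi.1 with h | h | h
      · exact absurd h hi.2
      · exact ⟨i + 2, fun _ => ⟨Or.inl rfl, h⟩⟩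
      · exact ⟨i + 3, fun _ => ⟨Or.inr rfl, h⟩⟩
    · exact ⟨0, fun h => absurd h hi⟩
  choose τ hτ using C'
  refine transport w B τ ?_ _ (fun i => u i - w i) le_rfl ?_ ?_
  · intro i hi k hk h
    by_contra hne
    obtain ⟨a1, a2, a3, a4⟩ := hτ i hi
    obtain ⟨b1, b2, b3, b4⟩ := hτ k hk
    exact hi.2 (c2 hw i k hne _ _ a1 b1 h a2 b2 a3)
  · unfold Gd at hu hw
    simp [Fin.sum_univ_five]
    omega
  · intro i hi
    by_cases h : i ∈ B
    · right
      obtain ⟨a1, a2, a3, a4⟩ := hτ i h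
      exact ⟨h, by omega, a3⟩
    · left
      intro j _
      simp only [B, Set.mem_ofPred_eq, not_and, not_not] at h
      exact h (by simpa using hi) j

lemma small {q : ℤ} {w u : Fin 5 → ℤ} (hw : Gd q w) (hu : Gd q u) (hq : 2 ≤ q)
    (NM : ∀ i j, i ≠ j → w i < u i → Gd q (mv w i j) → w j ≤ w i + 1)
    (hQ : kQ u ≤ kQ w) : kQ u = kQ w ∧ ∀ i, u i - w i = -1 ∨ u i - w i = 0 ∨ u i - w i = 1 := by
  have T := trans_core hw hu hq NM
  simp only [Fin.sum_univ_five] at T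
  unfold kQ at *
  have key : ∀ x : ℤ, ∃ y, 2 * max x 0 = y + x ∧ y ≤ x ^ 2 ∧ (y = x ^ 2 → x = -1 ∨ x = 0 ∨ x = 1) := by
    intro x
    refine ⟨2 * max x 0 - x, by ring, ?_, ?_⟩
    · rcases le_total x 0 with h | h
      · rw [max_eq_right h]
        rcases eq_or_lt_of_le h with h | h
        · simp [h]
        · nlinarith
      · rw [max_eq_left h]
        rcases eq_or_lt_of_le h with h | h
        · simp [← h]
        · nlinarith
    · rcases le_total x 0 with h | h
      · rw [max_eq_right h]
        intro e
        have : x * (x + 1) = 0 := by linarith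
        rcases mul_eq_zero.mp this with h | h <;> omega
      · rw [max_eq_left h]
        intro e
        have : x * (x - 1) = 0 := by linarith
        rcases mul_eq_zero.mp this with h | h <;> omega
  obtain ⟨y0, a0, b0, c0⟩ := key (u 0 - w 0)
  obtain ⟨y1, a1, b1, c1⟩ := key (u 1 - w 1)
  obtain ⟨y2, a2, b2, c2⟩ := key (u 2 - w 2)
  obtain ⟨y3, a3, b3, c3⟩ := key (u 3 - w 3)
  obtain ⟨y4, a4, b4, c4⟩ := key (u 4 - w 4)
  have hs := hw.1
  have hs' := hu.1
  have E : 0 ≤ 2 * (w 0 * (u 0 - w 0) + w 1 * (u 1 - w 1) + w 2 * (u 2 - w 2) + w 3 * (u 3 - w 3)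
    + w 4 * (u 4 - w 4)) + (y0 + y1 + y2 + y3 + y4) := by linarith
  refine ⟨by linarith, ?_⟩
  intro i
  fin_cases i
  · exact c0 (by linarith)
  · exact c1 (by linarith)
  · exact c2 (by linarith)
  · exact c3 (by linarith)
  · exact c4 (by linarith)

lemma Gd_mv {q : ℤ} {w : Fin 5 → ℤ} (hw : Gd q w) (i j : Fin 5)
    (h3 : j = i + 3 ∨ w i + w (i + 3) < q) (h2 : j = i + 2 ∨ w i + w (i + 2) < q) :
    Gd q (mv w i j) := by
  rcases h3 with rfl | h3
  · rcases h2 with h2 | h2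
    · exfalso; clear * - h2; revert i; decide
    · exact Gd_mv3 hw i h2
  · rcases h2 with rfl | h2
    · exact Gd_mv2 hw i h3
    · exact Gd_mv1 hw i h2 h3 j

/-- all cases of two raised and two lowered positions -/
def Cfg (i k j l z : Fin 5) : Prop :=
  i < k ∧ j < l ∧ i ≠ j ∧ i ≠ l ∧ k ≠ j ∧ k ≠ l ∧ z ≠ i ∧ z ≠ k ∧ z ≠ j ∧ z ≠ l

instance (i k j l z : Fin 5) : Decidable (Cfg i k j l z) := by unfold Cfg; infer_instance

set_option maxHeartbeats 8000000 in
lemma tie_pos {q : ℤ} {w u : Fin 5 → ℤ} (hw : Gd q w) (hu : Gd q u) (hq : 2 ≤ q)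
    (i k j l z : Fin 5) (hc : Cfg i k j l z)
    (hi : u i = w i + 1) (hk : u k = w k + 1) (hj : u j = w j - 1) (hl : u l = w l - 1)
    (hz : u z = w z) (hQ : w i + w k + 2 = w j + w l)
    (Fij : (j = i + 3 ∨ w i + w (i + 3) < q) → (j = i + 2 ∨ w i + w (i + 2) < q) → w j ≤ w i + 1)
    (Fil : (l = i + 3 ∨ w i + w (i + 3) < q) → (l = i + 2 ∨ w i + w (i + 2) < q) → w l ≤ w i + 1)
    (Fkj : (j = k + 3 ∨ w k + w (k + 3) < q) → (j = k + 2 ∨ w k + w (k + 2) < q) → w j ≤ w k + 1)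
    (Fkl : (l = k + 3 ∨ w k + w (k + 3) < q) → (l = k + 2 ∨ w k + w (k + 2) < q) → w l ≤ w k + 1) :
    1 ≤ w i ∧ 1 ≤ w k ∧ 2 ≤ w j ∧ 2 ≤ w l := by
  unfold Gd at hw hu
  fin_cases z <;> fin_cases i <;> fin_cases k <;> first | (exfalso; revert hc; clear * -; revert j l; decide) | skip
  all_goals fin_cases j <;> fin_cases l <;> first | (exfalso; revert hc; clear * -; decide) | skip
  all_goals
    clear hc
    simp at *
    simp only [hi, hk, hj, hl, hz] at hu
    omega

set_option maxHeartbeats 8000000 in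
lemma tie_fin {q : ℤ} {w u : Fin 5 → ℤ} (hw : Gd q w) (hu : Gd q u) (hq : 2 ≤ q)
    (i k j l z : Fin 5) (hc : Cfg i k j l z)
    (hi : u i = w i + 1) (hk : u k = w k + 1) (hj : u j = w j - 1) (hl : u l = w l - 1)
    (hz : u z = w z) (hQ : w i + w k + 2 = w j + w l)
    (pi : 1 ≤ w i) (pk : 1 ≤ w k) (pj : 2 ≤ w j) (pl : 2 ≤ w l)
    (s : Fin 5 → ℤ) (hs : ∀ x, s x = if w z = 0 ∧ (x = z + 2 ∨ x = z + 3) then 1 else 0)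
    (U : s j + s l < s i + s k ∨ (s j + s l = s i + s k ∧
      (2 : ℤ) ^ (i : ℕ) + 2 ^ (k : ℕ) ≤ 2 ^ (j : ℕ) + 2 ^ (l : ℕ)))
    (Fij : (j = i + 3 ∨ w i + w (i + 3) < q) → (j = i + 2 ∨ w i + w (i + 2) < q) →
      w j ≤ w i + 1 ∧ (w j = w i + 1 → (s i < s j ∨ (s i = s j ∧ j ≤ i))))
    (Fil : (l = i + 3 ∨ w i + w (i + 3) < q) → (l = i + 2 ∨ w i + w (i + 2) < q) →
      w l ≤ w i + 1 ∧ (w l = w i + 1 → (s i < s l ∨ (s i = s l ∧ l ≤ i))))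
    (Fkj : (j = k + 3 ∨ w k + w (k + 3) < q) → (j = k + 2 ∨ w k + w (k + 2) < q) →
      w j ≤ w k + 1 ∧ (w j = w k + 1 → (s k < s j ∨ (s k = s j ∧ j ≤ k))))
    (Fkl : (l = k + 3 ∨ w k + w (k + 3) < q) → (l = k + 2 ∨ w k + w (k + 2) < q) →
      w l ≤ w k + 1 ∧ (w l = w k + 1 → (s k < s l ∨ (s k = s l ∧ l ≤ k)))) :
    False := by
  unfold Gd at hw hu
  simp only [hs] at *
  clear hs
  by_cases z0 : w z = 0
  · simp only [z0, true_and] at U Fij Fil Fkj Fkl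
    fin_cases z <;> fin_cases i <;> fin_cases k <;> first | (exfalso; revert hc; clear * -; revert j l; decide) | skip
    all_goals fin_cases j <;> fin_cases l <;> first | (exfalso; revert hc; clear * -; decide) | skip
    all_goals
      clear hc
      simp at *
      try simp only [hi, hk, hj, hl, hz] at hu
      try omega
  · simp only [z0, false_and] at U Fij Fil Fkj Fkl
    fin_cases z <;> fin_cases i <;> fin_cases k <;> first | (exfalso; revert hc; clear * -; revert j l; decide) | skip
    all_goals fin_cases j <;> fin_cases l <;> first | (exfalso; revert hc; clear * -; decide) | skip
    all_goals
      clear hc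
      simp at *
      try simp only [hi, hk, hj, hl, hz] at hu
      try omega

lemma exists_cfg (δ : Fin 5 → ℤ) (h : ∀ i, δ i = -1 ∨ δ i = 0 ∨ δ i = 1)
    (hs : δ 0 + δ 1 + δ 2 + δ 3 + δ 4 = 0)
    (h3 : ∃ a b, a ≠ b ∧ 0 < δ a ∧ 0 < δ b) :
    ∃ i k j l z, Cfg i k j l z ∧ δ i = 1 ∧ δ k = 1 ∧ δ j = -1 ∧ δ l = -1 ∧ δ z = 0 := by
  obtain ⟨a, b, hab, ha, hb⟩ := h3
  wlog hlt : a < b generalizing a b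
  · exact this b a hab.symm hb ha (lt_of_le_of_ne (not_lt.mp hlt) hab.symm)
  have h0 := h 0
  have h1 := h 1
  have h2 := h 2
  have h3 := h 3
  have h4 := h 4
  have ha' : δ a = 1 := by have := h a; omega
  have hb' : δ b = 1 := by have := h b; omega
  have aux : ∀ x y z : Fin 5, Cfg a b x y z ∨ Cfg a b y x z → δ x = -1 → δ y = -1 → δ z = 0 →
      ∃ i k j l z, Cfg i k j l z ∧ δ i = 1 ∧ δ k = 1 ∧ δ j = -1 ∧ δ l = -1 ∧ δ z = 0 := by
    intro x y z hc hx hy hz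
    rcases hc with hc | hc
    · exact ⟨a, b, x, y, z, hc, ha', hb', hx, hy, hz⟩
    · exact ⟨a, b, y, x, z, hc, ha', hb', hy, hx, hz⟩
  have main : ∀ x y z : Fin 5, x ≠ y → x ≠ z → y ≠ z → a ≠ x → a ≠ y → a ≠ z → b ≠ x → b ≠ y →
      b ≠ z → δ x + δ y + δ z = -2 →
      ∃ i k j l z, Cfg i k j l z ∧ δ i = 1 ∧ δ k = 1 ∧ δ j = -1 ∧ δ l = -1 ∧ δ z = 0 := by
    intro x y z e1 e2 e3 e4 e5 e6 e7 e8 e9 e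
    have hx := h x
    have hy := h y
    have hz := h z
    have : (δ x = -1 ∧ δ y = -1 ∧ δ z = 0) ∨ (δ x = -1 ∧ δ z = -1 ∧ δ y = 0) ∨
      (δ y = -1 ∧ δ z = -1 ∧ δ x = 0) := by omega
    rcases this with ⟨p, q, r⟩ | ⟨p, q, r⟩ | ⟨p, q, r⟩
    · exact aux x y z (by unfold Cfg; omega) p q r
    · exact aux x z y (by unfold Cfg; omega) p q r
    · exact aux y z x (by unfold Cfg; omega) p q r
  have : ∃ x y z : Fin 5, x ≠ y ∧ x ≠ z ∧ y ≠ z ∧ a ≠ x ∧ a ≠ y ∧ a ≠ z ∧ b ≠ x ∧ b ≠ y ∧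
      b ≠ z := by
    clear * - hab; revert a b; decide
  obtain ⟨x, y, z, e1, e2, e3, e4, e5, e6, e7, e8, e9⟩ := this
  refine main x y z e1 e2 e3 e4 e5 e6 e7 e8 e9 ?_
  have hS : ∑ t, δ t = 0 := by rw [Fin.sum_univ_five]; exact hs
  have hU : (Finset.univ : Finset (Fin 5)) = {a, b, x, y, z} := by
    clear * - hab e1 e2 e3 e4 e5 e6 e7 e8 e9
    symm
    apply Finset.eq_univ_of_card
    simp [*]
  rw [hU, Finset.sum_insert (by simp [*]), Finset.sum_insert (by simp [*]),
    Finset.sum_insert (by simp [*]), Finset.sum_insert (by simp [*]), Finset.sum_singleton] at hS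
  omega

lemma kQ_sum (v : Fin 5 → ℤ) : kQ v = ∑ x, v x ^ 2 := by
  rw [Fin.sum_univ_five]; rfl

lemma kC_sum (v : Fin 5 → ℤ) : kC v = ∑ x : Fin 5, 2 ^ (x : ℕ) * v x := by
  rw [Fin.sum_univ_five]; simp [kC]

lemma sum_cfg {i k j l z : Fin 5} (hc : Cfg i k j l z) (f : Fin 5 → ℤ) :
    ∑ x, f x = f i + f k + f j + f l + f z := by
  have hU : (Finset.univ : Finset (Fin 5)) = {i, k, j, l, z} := by
    revert i k j l z; decide
  obtain ⟨h1, h2, h3, h4, h5, h6, h7, h8, h9, h10⟩ := hc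
  have := h1.ne
  have := h2.ne
  rw [hU, Finset.sum_insert (by simp [*, Ne.symm]), Finset.sum_insert (by simp [*, Ne.symm]),
    Finset.sum_insert (by simp [*, Ne.symm]), Finset.sum_insert (by simp [*, Ne.symm]),
    Finset.sum_singleton]
  ring

theorem core_move {q : ℤ} {w u : Fin 5 → ℤ} (hw : Gd q w) (hu : Gd q u) (hq : 2 ≤ q)
    (hne : u ≠ w) (hle : rho u ≤ rho w) :
    ∃ i j, i ≠ j ∧ w i < u i ∧ Gd q (mv w i j) ∧ (rho (mv w i j) < rho w ∨ mv w i j = u) := by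
  by_contra! H
  have NM : ∀ i j, i ≠ j → w i < u i → Gd q (mv w i j) → w j ≤ w i + 1 := by
    intro i j hij hi hg
    have := rho_le.mp (H i j hij hi hg).1
    rw [kQ_mv w i j hij] at this
    omega
  have hQ : kQ u ≤ kQ w := by
    have := rho_le.mp hle
    omega
  obtain ⟨hQe, hsm⟩ := small hw hu hq NM hQ
  have hsum : (u 0 - w 0) + (u 1 - w 1) + (u 2 - w 2) + (u 3 - w 3) + (u 4 - w 4) = 0 := by
    have := hw.1
    have := hu.1
    omega
  have two : ∃ a b, a ≠ b ∧ 0 < u a - w a ∧ 0 < u b - w b := by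
    have hS : ∑ x, (u x - w x) = 0 := by rw [Fin.sum_univ_five]; exact hsum
    have exP : ∃ a, 0 < u a - w a := by
      by_contra! h
      have := (Finset.sum_eq_zero_iff_of_nonpos (fun i _ => h i)).mp hS
      apply hne
      funext x
      have := this x (Finset.mem_univ x)
      omega
    obtain ⟨a, ha⟩ := exP
    have exN : ∃ b, u b - w b < 0 := by
      by_contra! h
      have := (Finset.sum_eq_zero_iff_of_nonneg (fun i _ => h i)).mp hS a (Finset.mem_univ a)
      omega
    obtain ⟨b, hb⟩ := exN
    by_contra! hno
    have hab : a ≠ b := by rintro rfl; omega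
    have hothers : ∀ x, x ≠ a → u x - w x ≤ 0 := fun x hx => hno a x hx.symm ha
    have hS2 : ∑ x, (u x - mv w a b x) = 0 := by
      simp only [mv]
      have : ∀ x, u x - (w x + (if x = a then 1 else 0) - (if x = b then 1 else 0)) =
        (u x - w x) - (if x = a then 1 else 0) + (if x = b then 1 else 0) := fun x => by ring
      simp only [this, Finset.sum_add_distrib, Finset.sum_sub_distrib] at *
      simp
      omega
    have hnp : ∀ x ∈ Finset.univ, u x - mv w a b x ≤ 0 := by
      intro x _
      have h1 := hsm x
      simp only [mv]
      by_cases hxa : x = a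
      · subst hxa
        simp [hab]; omega
      · have := hothers x hxa
        by_cases hxb : x = b
        · subst hxb; simp [hxa]; omega
        · simp [hxa, hxb]; omega
    have h0 := (Finset.sum_eq_zero_iff_of_nonpos hnp).mp hS2
    have e : mv w a b = u := by
      funext x
      have := h0 x (Finset.mem_univ x)
      omega
    exact (H a b hab (by omega) (e ▸ hu)).2 e
  obtain ⟨i, k, j, l, z, hc, di, dk, dj, dl, dz⟩ := exists_cfg (fun x => u x - w x) hsm hsum two
  have ei : u i = w i + 1 := by omega
  have ek : u k = w k + 1 := by omega
  have ej : u j = w j - 1 := by omega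
  have el : u l = w l - 1 := by omega
  have ez : u z = w z := by omega
  have hQ2 : w i + w k + 2 = w j + w l := by
    rw [kQ_sum, kQ_sum, sum_cfg hc, sum_cfg hc, ei, ek, ej, el, ez] at hQe
    linarith
  have hc' := hc
  obtain ⟨hik, hjl, hij, hil, hkj, hkl, hzi, hzk, hzj, hzl⟩ := hc'
  have pos := tie_pos hw hu hq i k j l z hc ei ek ej el ez hQ2
    (fun a b => NM i j hij (by omega) (Gd_mv hw i j a b))
    (fun a b => NM i l hil (by omega) (Gd_mv hw i l a b))
    (fun a b => NM k j hkj (by omega) (Gd_mv hw k j a b))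
    (fun a b => NM k l hkl (by omega) (Gd_mv hw k l a b))
  obtain ⟨pi, pk, pj, pl⟩ := pos
  have hall : ∀ x, x = i ∨ x = k ∨ x = j ∨ x = l ∨ x = z := by
    clear * - hc; revert i k j l z; decide
  have posw : ∀ x, x ≠ z → w x ≠ 0 := by
    intro x hx
    rcases hall x with rfl | rfl | rfl | rfl | rfl <;> first | omega | exact absurd rfl hx
  have posu : ∀ x, x ≠ z → u x ≠ 0 := by
    intro x hx
    rcases hall x with rfl | rfl | rfl | rfl | rfl <;> first | omega | exact absurd rfl hx
  let s : Fin 5 → ℤ := fun x => if w z = 0 ∧ (x = z + 2 ∨ x = z + 3) then 1 else 0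
  have z23 : z + 2 ≠ z + 3 := by clear * -; revert z; decide
  have zz2 : z + 2 ≠ z := by clear * -; revert z; decide
  have zz3 : z + 3 ≠ z := by clear * -; revert z; decide
  have kKw := kK_of w z posw
  have kKu := kK_of u z posu
  rw [ez] at kKu
  -- the tied moves
  have tie : ∀ a b, a ≠ b → w a < u a → z ≠ a → z ≠ b → 1 ≤ w a → 2 ≤ w b →
      (b = a + 3 ∨ w a + w (a + 3) < q) → (b = a + 2 ∨ w a + w (a + 2) < q) →
      w b ≤ w a + 1 ∧ (w b = w a + 1 → (s a < s b ∨ (s a = s b ∧ b ≤ a))) := by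
    intro a b hab ha hza hzb pa pb f3 f2
    have hg := Gd_mv hw a b f3 f2
    refine ⟨NM a b hab ha hg, fun he => ?_⟩
    have R := rho_le.mp (H a b hab ha hg).1
    rw [kQ_mv w a b hab, kC_mv] at R
    have posm : ∀ x, x ≠ z → mv w a b x ≠ 0 := by
      intro x hx
      have h0 := posw x hx
      simp only [mv]
      by_cases h1 : x = a
      · subst h1; simp [hab]; omega
      · by_cases h2 : x = b
        · subst h2; simp [h1]; omega
        · simp [h1, h2, h0]
    have kKm := kK_of _ z posm
    have mz : mv w a b z = w z := by simp [mv, hza, hzb]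
    have hsm : kK (mv w a b) = kK w - s a + s b := by
      rw [kKm, mz, kKw]
      simp only [s]
      by_cases z0 : w z = 0
      · simp only [z0, if_true, true_and, mv]
        simp only [eq_comm (a := a), eq_comm (a := b)]
        by_cases g1 : z + 2 = a <;> by_cases g2 : z + 3 = a <;> by_cases g3 : z + 2 = b <;>
          by_cases g4 : z + 3 = b <;> simp [g1, g2, g3, g4] <;> first | omega | skip
        all_goals exact absurd (by rw [g1, g2]) z23
      · simp [z0]
    have hC : (kC w ≤ kC w + 2 ^ (a : ℕ) - 2 ^ (b : ℕ)) → b ≤ a := by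
      intro h
      have h' : (2 : ℤ) ^ (b : ℕ) ≤ 2 ^ (a : ℕ) := by linarith
      have := (pow_le_pow_iff_right₀ (by norm_num : (1 : ℤ) < 2)).mp h'
      exact this
    rcases R with R | ⟨_, R | ⟨R1, R2⟩⟩
    · omega
    · left; omega
    · right; exact ⟨by omega, hC R2⟩
  refine tie_fin hw hu hq i k j l z hc ei ek ej el ez hQ2 pi pk pj pl s (fun x => rfl) ?_
    (tie i j hij (by omega) hzi hzj pi pj) (tie i l hil (by omega) hzi hzl pi pl)
    (tie k j hkj (by omega) hzk hzj pk pj) (tie k l hkl (by omega) hzk hzl pk pl)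
  have R := rho_le.mp hle
  have hC : kC u = kC w + (2 : ℤ) ^ (i : ℕ) + 2 ^ (k : ℕ) - 2 ^ (j : ℕ) - 2 ^ (l : ℕ) := by
    rw [kC_sum, kC_sum, sum_cfg hc, sum_cfg hc, ei, ek, ej, el, ez]
    ring
  have hK : kK u = kK w - (s i + s k) + (s j + s l) := by
    rw [kKu, kKw]
    simp only [s]
    by_cases z0 : w z = 0
    · simp only [z0, if_true, true_and]
      have hu' : ∀ x, u x = w x + (if x = i then 1 else 0) + (if x = k then 1 else 0)
          - (if x = j then 1 else 0) - (if x = l then 1 else 0) := by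
        intro x
        have := hik.ne
        have := hjl.ne
        rcases hall x with rfl | rfl | rfl | rfl | rfl <;> simp [*, Ne.symm]
      have sp : ∀ x, (if x = z + 2 ∨ x = z + 3 then (1 : ℤ) else 0) =
          (if z + 2 = x then 1 else 0) + (if z + 3 = x then 1 else 0) := by
        intro x
        by_cases h1 : z + 2 = x
        · subst h1; simp [z23.symm]
        · by_cases h2 : z + 3 = x
          · subst h2; simp [z23]
          · simp [h1, h2, Ne.symm h1, Ne.symm h2]
      rw [hu' (z + 2), hu' (z + 3), sp, sp, sp, sp]
      ring
    · simp [z0]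
  rw [hC, hK] at R
  rcases R with R | ⟨_, R | ⟨R1, R2⟩⟩
  · omega
  · left; omega
  · right; exact ⟨by omega, by linarith⟩

/-- natural exponent vectors -/
def Gn (q : ℕ) : Set (Fin 5 →₀ ℕ) := {v | Gd q (fun x => (v x : ℤ))}

lemma mem_Gn {q : ℕ} {v : Fin 5 →₀ ℕ} : v ∈ Gn q ↔ Gd q (fun x => (v x : ℤ)) := Iff.rfl

lemma Gn_finite (q : ℕ) : (Gn q).Finite := by
  apply (Set.finite_Iic (Finsupp.equivFunOnFinite.symm (fun _ : Fin 5 => 2 * q))).subset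
  intro v hv
  have hv : Gd q (fun x => (v x : ℤ)) := hv
  unfold Gd at hv
  beta_reduce at hv
  intro x
  fin_cases x <;> simp <;> omega

noncomputable def edg (k : Fin 5) : Fin 5 →₀ ℕ := Finsupp.single k 1 + Finsupp.single (k + 1) 1

lemma edgeIdeal_eq (K : Type*) [Field K] :
    edgeIdeal K cycle5 = Ideal.span ((fun v => (monomial v (1 : K))) '' Set.range edg) := by
  unfold edgeIdeal
  congr 1
  have hm : ∀ a b : Fin 5, (X a * X b : MvPolynomial (Fin 5) K) =
      monomial (Finsupp.single a 1 + Finsupp.single b 1) 1 := by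
    intro a b
    simp [X, monomial_mul]
  ext m
  constructor
  · rintro ⟨a, b, hab, rfl⟩
    rw [cycle5, SimpleGraph.fromRel_adj] at hab
    rcases hab with ⟨_, rfl | rfl⟩
    · exact ⟨_, ⟨a, rfl⟩, (hm _ _).symm⟩
    · exact ⟨_, ⟨b, rfl⟩, by rw [mul_comm]; exact (hm _ _).symm⟩
  · rintro ⟨_, ⟨k, rfl⟩, rfl⟩
    refine ⟨k, k + 1, ?_, (hm _ _).symm⟩
    rw [cycle5, SimpleGraph.fromRel_adj]
    exact ⟨by clear * -; revert k; decide, Or.inl rfl⟩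

lemma Gn_zero : Gn 0 = {0} := by
  ext v
  simp only [Gn, Set.mem_ofPred_eq, Set.mem_singleton_iff]
  constructor
  · intro h
    unfold Gd at h
    beta_reduce at h
    ext x
    fin_cases x <;> simp <;> omega
  · rintro rfl
    simp [Gd]

lemma Gn_add {q : ℕ} {v : Fin 5 →₀ ℕ} (hv : v ∈ Gn q) (k : Fin 5) : v + edg k ∈ Gn (q + 1) := by
  have hv : Gd q (fun x => (v x : ℤ)) := hv
  rw [mem_Gn]
  unfold Gd at *
  beta_reduce at *
  fin_cases k <;> simp [edg, Finsupp.single_apply] <;> omega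

lemma Gn_sub {q : ℕ} {v : Fin 5 →₀ ℕ} (hv : v ∈ Gn (q + 1)) : ∃ k, ∃ u ∈ Gn q, v = u + edg k := by
  have hv : Gd ((q + 1 : ℕ) : ℤ) (fun x => (v x : ℤ)) := hv
  unfold Gd at hv
  beta_reduce at hv
  push_cast at hv
  have ex : ∃ k : Fin 5, (v (k + 2) : ℤ) + v (k + 4) ≤ q := by
    by_contra! h
    have h0 := h 0
    have h1 := h 1
    have h2 := h 2
    have h3 := h 3
    have h4 := h 4
    simp at h0 h1 h2 h3 h4
    omega
  obtain ⟨k, hk⟩ := ex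
  have hle : edg k ≤ v := by
    intro x
    fin_cases k <;> fin_cases x <;> simp [edg, Finsupp.single_apply] at * <;> omega
  refine ⟨k, v - edg k, ?_, (tsub_add_cancel_of_le hle).symm⟩
  have hx : ∀ x, ((v - edg k) x : ℤ) = v x - edg k x := by
    intro x
    have := hle x
    rw [Finsupp.tsub_apply]
    omega
  rw [mem_Gn]
  simp only [hx]
  unfold Gd
  clear hx hle
  fin_cases k <;> simp [edg, Finsupp.single_apply] at * <;> omega

lemma pow_eq (K : Type*) [Field K] (q : ℕ) :
    (edgeIdeal K cycle5) ^ q = Ideal.span ((fun v => (monomial v (1 : K))) '' Gn q) := by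
  induction q with
  | zero => simp [Gn_zero, Ideal.one_eq_top]
  | succ q ih =>
    rw [pow_succ, ih, edgeIdeal_eq, Ideal.span_mul_span']
    congr 1
    ext m
    simp only [Set.mem_mul, Set.mem_image]
    constructor
    · rintro ⟨_, ⟨v, hv, rfl⟩, _, ⟨_, ⟨k, rfl⟩, rfl⟩, rfl⟩
      exact ⟨v + edg k, Gn_add hv k, by simp [monomial_mul]⟩
    · rintro ⟨v, hv, rfl⟩
      obtain ⟨k, u, hu, rfl⟩ := Gn_sub hv
      exact ⟨_, ⟨u, hu, rfl⟩, _, ⟨_, ⟨k, rfl⟩, rfl⟩, by simp [monomial_mul]⟩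

/-- combinatorial criterion for the colon ideal -/
lemma colon_vars {K : Type*} [Field K] {σ : Type*} (A : Set (σ →₀ ℕ)) (w : σ →₀ ℕ)
    (h : ∀ u ∈ A, ∃ i, w i < u i ∧ ∃ v ∈ A, v ≤ w + Finsupp.single i 1) :
    genByVars (Submodule.colon (Ideal.span ((fun v => (monomial v (1 : K))) '' A))
      (Ideal.span {(monomial w (1 : K))})) := by
  classical
  refine ⟨{i | ∃ v ∈ A, v ≤ w + Finsupp.single i 1}, ?_⟩
  have hcol : ∀ f : MvPolynomial σ K, f ∈ Submodule.colon
      (Ideal.span ((fun v => (monomial v (1 : K))) '' A))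
      ((Ideal.span {(monomial w (1 : K))} : Ideal (MvPolynomial σ K)) : Set (MvPolynomial σ K)) ↔
      f * monomial w 1 ∈ Ideal.span ((fun v => (monomial v (1 : K))) '' A) := by
    intro f
    rw [Submodule.mem_colon]
    constructor
    · intro hf
      exact hf _ (Ideal.subset_span rfl)
    · intro hf p hp
      obtain ⟨c, rfl⟩ := Ideal.mem_span_singleton'.mp hp
      rw [smul_eq_mul, mul_left_comm]
      exact Ideal.mul_mem_left _ _ hf
  apply le_antisymm
  · intro f hf
    rw [hcol, mem_ideal_span_monomial_image] at hf
    rw [mem_ideal_span_X_image]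
    intro m hm
    have hm' : m + w ∈ (f * monomial w 1).support := by
      rw [mem_support_iff, coeff_mul_monomial, mul_one]
      exact mem_support_iff.mp hm
    obtain ⟨u, hu, hle⟩ := hf _ hm'
    obtain ⟨i, hi, hv⟩ := h u hu
    refine ⟨i, hv, ?_⟩
    have := hle i
    rw [Finsupp.add_apply] at this
    omega
  · rw [Ideal.span_le]
    rintro _ ⟨i, ⟨v, hv, hle⟩, rfl⟩
    rw [SetLike.mem_coe, hcol]
    have : (X i * monomial w 1 : MvPolynomial σ K) =
        monomial (w + Finsupp.single i 1 - v) 1 * monomial v 1 := by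
      rw [X, monomial_mul, monomial_mul, tsub_add_cancel_of_le hle, add_comm]
    dsimp only
    rw [this]
    exact Ideal.mul_mem_left _ _ (Ideal.subset_span ⟨v, hv, rfl⟩)

/-- for every `q ≥ 2`, `I(C_5)^q` has linear quotients. -/
theorem stmt8 {K : Type*} [Field K] (q : ℕ) (hq : 2 ≤ q) :
    HasLinearQuotients ((edgeIdeal K cycle5) ^ q) := by
  classical
  let T : Finset (Fin 5 →₀ ℕ) := (Gn_finite q).toFinset
  let e : Fin T.card ≃ T := T.equivFin.symm
  let f : Fin T.card → ℤ ×ₗ (ℤ ×ₗ ℤ) := fun n => rho (fun x => (((e n : Fin 5 →₀ ℕ) x : ℕ) : ℤ))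
  let d : Fin T.card → (Fin 5 →₀ ℕ) := fun n => e (Tuple.sort f n)
  have hmono : Monotone (f ∘ Tuple.sort f) := Tuple.monotone_sort f
  have hf : ∀ n, (f ∘ Tuple.sort f) n = rho (fun x => ((d n x : ℕ) : ℤ)) := fun n => rfl
  have hdG : ∀ n, d n ∈ Gn q := fun n => (Gn_finite q).mem_toFinset.mp (e (Tuple.sort f n)).2
  have hinj : Function.Injective d :=
    Subtype.val_injective.comp (e.injective.comp (Tuple.sort f).injective)
  have hsurj : ∀ v ∈ Gn q, ∃ n, d n = v := by
    intro v hv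
    refine ⟨(Tuple.sort f).symm (e.symm ⟨v, (Gn_finite q).mem_toFinset.mpr hv⟩), ?_⟩
    simp [d]
  refine ⟨T.card, d, ?_, ?_, ?_⟩
  · intro i j hij hle
    apply hij
    apply hinj
    have h1 : Gd q (fun x => ((d i x : ℕ) : ℤ)) := hdG i
    have h2 : Gd q (fun x => ((d j x : ℕ) : ℤ)) := hdG j
    have a0 := hle 0
    have a1 := hle 1
    have a2 := hle 2
    have a3 := hle 3
    have a4 := hle 4
    have b1 := h1.1
    have b2 := h2.1
    beta_reduce at b1 b2
    ext x
    fin_cases x <;> simp <;> omega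
  · rw [pow_eq]
    congr 1
    ext m
    constructor
    · rintro ⟨n, rfl⟩
      exact ⟨d n, hdG n, rfl⟩
    · rintro ⟨v, hv, rfl⟩
      obtain ⟨n, rfl⟩ := hsurj v hv
      exact ⟨n, rfl⟩
  · intro n
    have hset : ((fun j => (monomial (d j) (1 : K))) '' {j | j < n}) =
        (fun v => (monomial v (1 : K))) '' (d '' {j | j < n}) := by
      rw [Set.image_image]
    rw [hset]
    apply colon_vars
    rintro _ ⟨m, hm, rfl⟩
    have hm : m < n := hm
    have hle : rho (fun x => ((d m x : ℕ) : ℤ)) ≤ rho (fun x => ((d n x : ℕ) : ℤ)) := by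
      rw [← hf, ← hf]; exact hmono hm.le
    have hne : (fun x => ((d m x : ℕ) : ℤ)) ≠ (fun x => ((d n x : ℕ) : ℤ)) := by
      intro h
      apply hm.ne
      apply hinj
      ext x
      exact_mod_cast congrFun h x
    obtain ⟨i, j, hij, hlt, hg, hor⟩ := core_move (mem_Gn.mp (hdG n)) (mem_Gn.mp (hdG m)) (by exact_mod_cast hq) hne hle
    refine ⟨i, by exact_mod_cast hlt, ?_⟩
    -- the moved vector is natural
    let v : Fin 5 →₀ ℕ := Finsupp.equivFunOnFinite.symm
      (fun x => (mv (fun x => ((d n x : ℕ) : ℤ)) i j x).toNat)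
    have hnn : ∀ x, 0 ≤ mv (fun x => ((d n x : ℕ) : ℤ)) i j x := by
      generalize mv (fun x => ((d n x : ℕ) : ℤ)) i j = g at hg
      unfold Gd at hg
      intro x
      fin_cases x <;> simp <;> omega
    have hvx : (fun x => ((v x : ℕ) : ℤ)) = mv (fun x => ((d n x : ℕ) : ℤ)) i j := by
      funext x
      simp only [v, Finsupp.equivFunOnFinite_symm_apply_apply]
      exact Int.toNat_of_nonneg (hnn x)
    have hvG : v ∈ Gn q := by
      rw [mem_Gn]
      rw [hvx]; exact hg
    obtain ⟨p, hp⟩ := hsurj v hvG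
    refine ⟨v, ⟨p, ?_, hp⟩, ?_⟩
    · change p < n
      rcases hor with h | h
      · rw [← hvx, ← hp, ← hf, ← hf] at h
        by_contra hpn
        exact absurd (hmono (not_lt.mp hpn)) (not_le.mpr h)
      · rw [← hvx, ← hp] at h
        have : p = m := by
          apply hinj
          ext x
          exact_mod_cast congrFun h x
        rw [this]; exact hm
    · intro x
      have h1 := congrFun hvx x
      simp only [mv] at h1
      rw [Finsupp.add_apply, Finsupp.single_apply]
      simp only [eq_comm (a := i)]
      split_ifs at h1 ⊢ <;> omega
end

section
/- Let G be the graph on {a,b,p,q,x,z} with edges ab, ax, bx, ap, bq, pz, xz, qz (a pentagon a-p-z-q-b-a together with a vertex x adjacent to a, b, z). Then for every s ≥ 2, I(G)^s has linear quotients. -/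
open MvPolynomial

/-- The graph on `{a,b,p,q,x,z}` (`a=0, b=1, p=2, q=3, x=4, z=5`) with edges
`ab, ax, bx, ap, bq, pz, xz, qz`. -/
def pentagonPlus : SimpleGraph (Fin 6) :=
  SimpleGraph.fromRel (fun i j =>
    (i = 0 ∧ j = 1) ∨ (i = 0 ∧ j = 4) ∨ (i = 1 ∧ j = 4) ∨ (i = 0 ∧ j = 2) ∨
    (i = 1 ∧ j = 3) ∨ (i = 2 ∧ j = 5) ∨ (i = 4 ∧ j = 5) ∨ (i = 3 ∧ j = 5))

def P13 (s a b p q x z : ℕ) : Prop :=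
  a + b + p + q + x + z = 2 * s ∧ p + q + x ≤ s ∧ a + z ≤ s ∧ b + z ≤ s ∧ a + q ≤ s ∧ b + p ≤ s

def key13 (s a b p q x z : ℕ) : ℕ ×ₗ ℕ ×ₗ ℕ ×ₗ ℕ ×ₗ ℕ :=
  if a = p ∧ b = q ∧ a + b = s then toLex (s + 1, toLex (0, toLex (q, toLex (0, 0))))
  else if x = 0 ∧ z = 0 ∧ a = p + 1 ∧ b = q + 1 then
    toLex (s + 1, toLex (0, toLex (q, toLex (1, 0))))
  else toLex (a + b, toLex (z + 1, toLex (q, toLex (b, p))))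

theorem key13_inj {s a b p q x z a' b' p' q' x' z' : ℕ}
    (hu : P13 s a b p q x z) (hv : P13 s a' b' p' q' x' z')
    (h : key13 s a b p q x z = key13 s a' b' p' q' x' z') :
    a = a' ∧ b = b' ∧ p = p' ∧ q = q' ∧ x = x' ∧ z = z' := by
  unfold P13 key13 at *
  split_ifs at h <;> simp only [toLex_inj, Prod.mk.injEq] at h <;> omega

theorem edge13 {s a b p q x z : ℕ} (h : P13 (s+1) a b p q x z) :
    (1 ≤ a ∧ 1 ≤ b ∧ P13 s (a-1) (b-1) p q x z) ∨
    (1 ≤ a ∧ 1 ≤ x ∧ P13 s (a-1) b p q (x-1) z) ∨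
    (1 ≤ b ∧ 1 ≤ x ∧ P13 s a (b-1) p q (x-1) z) ∨
    (1 ≤ a ∧ 1 ≤ p ∧ P13 s (a-1) b (p-1) q x z) ∨
    (1 ≤ b ∧ 1 ≤ q ∧ P13 s a (b-1) p (q-1) x z) ∨
    (1 ≤ p ∧ 1 ≤ z ∧ P13 s a b (p-1) q x (z-1)) ∨
    (1 ≤ x ∧ 1 ≤ z ∧ P13 s a b p q (x-1) (z-1)) ∨
    (1 ≤ q ∧ 1 ≤ z ∧ P13 s a b p (q-1) x (z-1)) := by
  unfold P13 at *
  by_contra hc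
  simp only [not_or] at hc
  grind (splits := 60)

set_option maxHeartbeats 4000000 in
theorem coreL {s a b p q x z a' b' p' q' x' z' : ℕ} (hs : 2 ≤ s)
    (hu : P13 s a' b' p' q' x' z') (hv : P13 s a b p q x z)
    (h : key13 s a' b' p' q' x' z' < key13 s a b p q x z)
    (hL : a = p ∧ b = q ∧ a + b = s) :
    (1 ≤ q ∧ a < a') ∨ (1 ≤ p ∧ x < x') ∨ (1 ≤ q ∧ x < x') ∨ 
    (1 ≤ a ∧ b + z < s ∧ z < z') ∨  (1 ≤ b ∧ a + z < s ∧ z < z') := by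
  unfold P13 key13 at *
  rw [if_pos hL] at h
  split_ifs at h <;> simp only [Prod.Lex.toLex_lt_toLex] at h <;> omega

set_option maxHeartbeats 4000000 in
theorem coreM {s a b p q x z a' b' p' q' x' z' : ℕ} (hs : 2 ≤ s)
    (hu : P13 s a' b' p' q' x' z') (hv : P13 s a b p q x z)
    (h : key13 s a' b' p' q' x' z' < key13 s a b p q x z)
    (hM : x = 0 ∧ z = 0 ∧ a = p + 1 ∧ b = q + 1) :
    (p < p') ∨ (x < x') ∨ 
    (b + z < s ∧ z < z') ∨  (a + z < s ∧ z < z') := by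
  unfold P13 key13 at *
  have hL : ¬ (a = p ∧ b = q ∧ a + b = s) := by omega
  rw [if_neg hL, if_pos hM] at h
  split_ifs at h <;> simp only [Prod.Lex.toLex_lt_toLex] at h <;> omega

set_option maxHeartbeats 4000000 in
theorem coreN {s a b p q x z a' b' p' q' x' z' : ℕ} (hs : 2 ≤ s)
    (hu : P13 s a' b' p' q' x' z') (hv : P13 s a b p q x z)
    (h : key13 s a' b' p' q' x' z' < key13 s a b p q x z)
    (hL : ¬ (a = p ∧ b = q ∧ a + b = s))
    (hM : ¬ (x = 0 ∧ z = 0 ∧ a = p + 1 ∧ b = q + 1)) :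
    (1 ≤ b ∧ a + z < s ∧ a + q < s ∧ ¬ (a + 1 = p ∧ b = q + 1 ∧ a + b = s) ∧ a < a') ∨
    (1 ≤ b ∧ p + q + x < s ∧ p < p') ∨
    (1 ≤ q ∧ b + p < s ∧ ¬ (a = p + 1 ∧ b + 1 = q ∧ a + b = s) ∧ p < p') ∨
    (1 ≤ a ∧ p + q + x < s ∧ q < q') ∨
    (1 ≤ b ∧ p + q + x < s ∧ x < x') ∨
    (1 ≤ p ∧ x < x') ∨ (1 ≤ q ∧ x < x') ∨ 
    (1 ≤ a ∧ b + z < s ∧ z < z') ∨  (1 ≤ b ∧ a + z < s ∧ z < z') := by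
  unfold P13 key13 at *
  rw [if_neg hL, if_neg hM] at h
  by_contra hc
  simp only [not_or] at hc
  split_ifs at h <;> simp only [Prod.Lex.toLex_lt_toLex] at h <;> grind (splits := 60)

set_option linter.unusedSimpArgs false


/-- Membership of an exponent vector among the generators of the `s`-th power. -/
def PF13 (s : ℕ) (m : Fin 6 →₀ ℕ) : Prop := P13 s (m 0) (m 1) (m 2) (m 3) (m 4) (m 5)

/-- The sorting key of an exponent vector. -/
def keyF13 (s : ℕ) (m : Fin 6 →₀ ℕ) : ℕ ×ₗ ℕ ×ₗ ℕ ×ₗ ℕ ×ₗ ℕ :=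
  key13 s (m 0) (m 1) (m 2) (m 3) (m 4) (m 5)

theorem keyF13_inj {s : ℕ} {u v : Fin 6 →₀ ℕ} (hu : PF13 s u) (hv : PF13 s v)
    (h : keyF13 s u = keyF13 s v) : u = v := by
  obtain ⟨h0, h1, h2, h3, h4, h5⟩ := key13_inj hu hv h
  ext i
  fin_cases i <;> assumption

/-- A single exchange step. -/
def Step13 (s : ℕ) (v : Fin 6 →₀ ℕ) (i : Fin 6) : Prop :=
  ∃ w, PF13 s w ∧ keyF13 s w < keyF13 s v ∧ w ≤ v + Finsupp.single i 1

theorem step13 {s : ℕ} {v : Fin 6 →₀ ℕ} (i j : Fin 6)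
    (h1 : PF13 s (v + Finsupp.single i 1 - Finsupp.single j 1))
    (h2 : keyF13 s (v + Finsupp.single i 1 - Finsupp.single j 1) < keyF13 s v) :
    Step13 s v i := ⟨_, h1, h2, tsub_le_self⟩


theorem step_za {s : ℕ} {v : Fin 6 →₀ ℕ} (hv : PF13 s v)
    (h1 : 1 ≤ v 0) (h2 : v 1 + v 5 < s) : Step13 s v 5 := by
  apply step13 5 0 <;> simp only [PF13, keyF13, P13, key13] at * <;>
    simp only [Finsupp.coe_tsub, Finsupp.coe_add, Pi.sub_apply, Pi.add_apply,
      Finsupp.single_apply, Fin.reduceEq, if_true, if_false, add_zero, tsub_zero]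
  · omega
  · split_ifs <;> simp only [Prod.Lex.toLex_lt_toLex, true_and, false_and,
      and_false, and_true, or_false, false_or, not_false_eq_true] at * <;> omega

theorem step_zb {s : ℕ} {v : Fin 6 →₀ ℕ} (hv : PF13 s v)
    (h1 : 1 ≤ v 1) (h2 : v 0 + v 5 < s) : Step13 s v 5 := by
  apply step13 5 1 <;> simp only [PF13, keyF13, P13, key13] at * <;>
    simp only [Finsupp.coe_tsub, Finsupp.coe_add, Pi.sub_apply, Pi.add_apply,
      Finsupp.single_apply, Fin.reduceEq, if_true, if_false, add_zero, tsub_zero]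
  · omega
  · split_ifs <;> simp only [Prod.Lex.toLex_lt_toLex, true_and, false_and,
      and_false, and_true, or_false, false_or, not_false_eq_true] at * <;> omega

theorem step_qa {s : ℕ} {v : Fin 6 →₀ ℕ} (hv : PF13 s v)
    (h1 : 1 ≤ v 0) (h2 : v 2 + v 3 + v 4 < s) (h3 : ¬ (v 0 = v 2 ∧ v 1 = v 3 ∧ v 0 + v 1 = s)) (h4 : ¬ (v 4 = 0 ∧ v 5 = 0 ∧ v 0 = v 2 + 1 ∧ v 1 = v 3 + 1)) : Step13 s v 3 := by
  apply step13 3 0 <;> simp only [PF13, keyF13, P13, key13] at * <;>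
    simp only [Finsupp.coe_tsub, Finsupp.coe_add, Pi.sub_apply, Pi.add_apply,
      Finsupp.single_apply, Fin.reduceEq, if_true, if_false, add_zero, tsub_zero]
  · omega
  · split_ifs <;> simp only [Prod.Lex.toLex_lt_toLex, true_and, false_and,
      and_false, and_true, or_false, false_or, not_false_eq_true] at * <;> omega

theorem step_pb {s : ℕ} {v : Fin 6 →₀ ℕ} (hv : PF13 s v)
    (h1 : 1 ≤ v 1) (h2 : v 2 + v 3 + v 4 < s) : Step13 s v 2 := by
  apply step13 2 1 <;> simp only [PF13, keyF13, P13, key13] at * <;>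
    simp only [Finsupp.coe_tsub, Finsupp.coe_add, Pi.sub_apply, Pi.add_apply,
      Finsupp.single_apply, Fin.reduceEq, if_true, if_false, add_zero, tsub_zero]
  · omega
  · split_ifs <;> simp only [Prod.Lex.toLex_lt_toLex, true_and, false_and,
      and_false, and_true, or_false, false_or, not_false_eq_true] at * <;> omega

theorem step_xb {s : ℕ} {v : Fin 6 →₀ ℕ} (hv : PF13 s v)
    (h1 : 1 ≤ v 1) (h2 : v 2 + v 3 + v 4 < s) : Step13 s v 4 := by
  apply step13 4 1 <;> simp only [PF13, keyF13, P13, key13] at * <;>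
    simp only [Finsupp.coe_tsub, Finsupp.coe_add, Pi.sub_apply, Pi.add_apply,
      Finsupp.single_apply, Fin.reduceEq, if_true, if_false, add_zero, tsub_zero]
  · omega
  · split_ifs <;> simp only [Prod.Lex.toLex_lt_toLex, true_and, false_and,
      and_false, and_true, or_false, false_or, not_false_eq_true] at * <;> omega

theorem step_xp {s : ℕ} {v : Fin 6 →₀ ℕ} (hv : PF13 s v)
    (h1 : 1 ≤ v 2) (h2 : ¬ (v 4 = 0 ∧ v 5 = 0 ∧ v 0 = v 2 + 1 ∧ v 1 = v 3 + 1)) : Step13 s v 4 := by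
  apply step13 4 2 <;> simp only [PF13, keyF13, P13, key13] at * <;>
    simp only [Finsupp.coe_tsub, Finsupp.coe_add, Pi.sub_apply, Pi.add_apply,
      Finsupp.single_apply, Fin.reduceEq, if_true, if_false, add_zero, tsub_zero]
  · omega
  · split_ifs <;> simp only [Prod.Lex.toLex_lt_toLex, true_and, false_and,
      and_false, and_true, or_false, false_or, not_false_eq_true] at * <;> omega

theorem step_xq {s : ℕ} {v : Fin 6 →₀ ℕ} (hv : PF13 s v)
    (h1 : 1 ≤ v 3) (h2 : ¬ (v 4 = 0 ∧ v 5 = 0 ∧ v 0 = v 2 + 1 ∧ v 1 = v 3 + 1)) : Step13 s v 4 := by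
  apply step13 4 3 <;> simp only [PF13, keyF13, P13, key13] at * <;>
    simp only [Finsupp.coe_tsub, Finsupp.coe_add, Pi.sub_apply, Pi.add_apply,
      Finsupp.single_apply, Fin.reduceEq, if_true, if_false, add_zero, tsub_zero]
  · omega
  · split_ifs <;> simp only [Prod.Lex.toLex_lt_toLex, true_and, false_and,
      and_false, and_true, or_false, false_or, not_false_eq_true] at * <;> omega

theorem step_aq {s : ℕ} {v : Fin 6 →₀ ℕ} (hv : PF13 s v)
    (h1 : 1 ≤ v 3) (h2 : (v 0 = v 2 ∧ v 1 = v 3 ∧ v 0 + v 1 = s)) : Step13 s v 0 := by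
  apply step13 0 3 <;> simp only [PF13, keyF13, P13, key13] at * <;>
    simp only [Finsupp.coe_tsub, Finsupp.coe_add, Pi.sub_apply, Pi.add_apply,
      Finsupp.single_apply, Fin.reduceEq, if_true, if_false, add_zero, tsub_zero]
  · omega
  · split_ifs <;> simp only [Prod.Lex.toLex_lt_toLex, true_and, false_and,
      and_false, and_true, or_false, false_or, not_false_eq_true] at * <;> omega

theorem step_ab {s : ℕ} {v : Fin 6 →₀ ℕ} (hv : PF13 s v)
    (h1 : 1 ≤ v 1) (h2 : v 0 + v 5 < s) (h3 : v 0 + v 3 < s) (h4 : ¬ (v 0 + 1 = v 2 ∧ v 1 = v 3 + 1 ∧ v 0 + v 1 = s)) (h5 : ¬ (v 0 = v 2 ∧ v 1 = v 3 ∧ v 0 + v 1 = s)) (h6 : ¬ (v 4 = 0 ∧ v 5 = 0 ∧ v 0 = v 2 + 1 ∧ v 1 = v 3 + 1)) : Step13 s v 0 := by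
  apply step13 0 1 <;> simp only [PF13, keyF13, P13, key13] at * <;>
    simp only [Finsupp.coe_tsub, Finsupp.coe_add, Pi.sub_apply, Pi.add_apply,
      Finsupp.single_apply, Fin.reduceEq, if_true, if_false, add_zero, tsub_zero]
  · omega
  · split_ifs <;> simp only [Prod.Lex.toLex_lt_toLex, true_and, false_and,
      and_false, and_true, or_false, false_or, not_false_eq_true] at * <;> omega

theorem step_pq {s : ℕ} {v : Fin 6 →₀ ℕ} (hv : PF13 s v)
    (h1 : 1 ≤ v 3) (h2 : v 1 + v 2 < s) (h3 : ¬ (v 0 = v 2 + 1 ∧ v 1 + 1 = v 3 ∧ v 0 + v 1 = s)) (h4 : ¬ (v 0 = v 2 ∧ v 1 = v 3 ∧ v 0 + v 1 = s)) (h5 : ¬ (v 4 = 0 ∧ v 5 = 0 ∧ v 0 = v 2 + 1 ∧ v 1 = v 3 + 1)) : Step13 s v 2 := by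
  apply step13 2 3 <;> simp only [PF13, keyF13, P13, key13] at * <;>
    simp only [Finsupp.coe_tsub, Finsupp.coe_add, Pi.sub_apply, Pi.add_apply,
      Finsupp.single_apply, Fin.reduceEq, if_true, if_false, add_zero, tsub_zero]
  · omega
  · split_ifs <;> simp only [Prod.Lex.toLex_lt_toLex, true_and, false_and,
      and_false, and_true, or_false, false_or, not_false_eq_true] at * <;> omega

theorem core13 {s : ℕ} (hs : 2 ≤ s) {u v : Fin 6 →₀ ℕ} (hu : PF13 s u) (hv : PF13 s v)
    (h : keyF13 s u < keyF13 s v) : ∃ i, v i < u i ∧ Step13 s v i := by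
  by_cases hL : v 0 = v 2 ∧ v 1 = v 3 ∧ v 0 + v 1 = s
  · rcases coreL hs hu hv h hL with ⟨h1, h2⟩ | ⟨h1, h2⟩ | ⟨h1, h2⟩ | ⟨h1, h2, h3⟩ | ⟨h1, h2, h3⟩
    · exact ⟨0, h2, step_aq hv h1 hL⟩
    · exact ⟨4, h2, step_xp hv h1 (by omega)⟩
    · exact ⟨4, h2, step_xq hv h1 (by omega)⟩
    · exact ⟨5, h3, step_za hv h1 h2⟩
    · exact ⟨5, h3, step_zb hv h1 h2⟩
  by_cases hM : v 4 = 0 ∧ v 5 = 0 ∧ v 0 = v 2 + 1 ∧ v 1 = v 3 + 1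
  · have h0 : 1 ≤ v 0 := by omega
    have h1 : 1 ≤ v 1 := by omega
    have hx : v 2 + v 3 + v 4 < s := by
      unfold PF13 P13 at hv
      omega
    rcases coreM hs hu hv h hM with h2 | h2 | ⟨h2, h3⟩ | ⟨h2, h3⟩
    · exact ⟨2, h2, step_pb hv h1 hx⟩
    · exact ⟨4, h2, step_xb hv h1 hx⟩
    · exact ⟨5, h3, step_za hv h0 h2⟩
    · exact ⟨5, h3, step_zb hv h1 h2⟩
  rcases coreN hs hu hv h hL hM with ⟨h1, h2, h3, h4, h5⟩ | ⟨h1, h2, h3⟩ | ⟨h1, h2, h3, h4⟩ |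
    ⟨h1, h2, h3⟩ | ⟨h1, h2, h3⟩ | ⟨h1, h2⟩ | ⟨h1, h2⟩ | ⟨h1, h2, h3⟩ | ⟨h1, h2, h3⟩
  · exact ⟨0, h5, step_ab hv h1 h2 h3 h4 hL hM⟩
  · exact ⟨2, h3, step_pb hv h1 h2⟩
  · exact ⟨2, h4, step_pq hv h1 h2 h3 hL hM⟩
  · exact ⟨3, h3, step_qa hv h1 h2 hL hM⟩
  · exact ⟨4, h3, step_xb hv h1 h2⟩
  · exact ⟨4, h2, step_xp hv h1 (by omega)⟩
  · exact ⟨4, h2, step_xq hv h1 (by omega)⟩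
  · exact ⟨5, h3, step_za hv h1 h2⟩
  · exact ⟨5, h3, step_zb hv h1 h2⟩

theorem PF13_degree {s : ℕ} {m : Fin 6 →₀ ℕ} (h : PF13 s m) : m.degree = 2 * s := by
  rw [Finsupp.degree_eq_sum, Fin.sum_univ_six]
  exact h.1

theorem finite13 (s : ℕ) : {m | PF13 s m}.Finite := by
  refine (Set.finite_Iic (Finsupp.equivFunOnFinite.symm fun _ : Fin 6 => 2 * s)).subset ?_
  intro m hm i
  have h : PF13 s m := hm
  unfold PF13 P13 at h
  simp only [Finsupp.equivFunOnFinite_symm_apply_apply]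
  fin_cases i <;> simp <;> omega

/-- The exponent vectors of the edges. -/
def E13 : Set (Fin 6 →₀ ℕ) :=
  {m | ∃ a b : Fin 6, pentagonPlus.Adj a b ∧ m = Finsupp.single a 1 + Finsupp.single b 1}

theorem edgeIdeal13 (K : Type*) [Field K] : edgeIdeal K pentagonPlus =
    Ideal.span ((fun m => monomial m (1 : K)) '' E13) := by
  unfold edgeIdeal E13
  congr 1
  ext f
  constructor
  · rintro ⟨a, b, h, rfl⟩
    refine ⟨_, ⟨a, b, h, rfl⟩, ?_⟩
    simp [X, monomial_mul]
  · rintro ⟨_, ⟨a, b, h, rfl⟩, rfl⟩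
    refine ⟨a, b, h, ?_⟩
    simp [X, monomial_mul]

theorem add_edge13 {s : ℕ} {e m : Fin 6 →₀ ℕ} (he : e ∈ E13) (hm : PF13 s m) :
    PF13 (s + 1) (e + m) := by
  obtain ⟨a, b, hab, rfl⟩ := he
  unfold pentagonPlus at hab
  rw [SimpleGraph.fromRel_adj] at hab
  unfold PF13 P13 at *
  obtain ⟨-, hab | hab⟩ := hab <;>
  rcases hab with ⟨rfl, rfl⟩ | ⟨rfl, rfl⟩ | ⟨rfl, rfl⟩ | ⟨rfl, rfl⟩ | ⟨rfl, rfl⟩ | ⟨rfl, rfl⟩ |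
    ⟨rfl, rfl⟩ | ⟨rfl, rfl⟩ <;>
  simp only [Finsupp.coe_add, Pi.add_apply,
      Finsupp.single_apply, Fin.reduceEq, if_true, if_false, add_zero, zero_add] <;> omega

theorem sub_edge13_aux {s : ℕ} {m : Fin 6 →₀ ℕ} (i j : Fin 6) (hij : pentagonPlus.Adj i j)
    (hi : 1 ≤ m i) (hj : 1 ≤ m j)
    (h : PF13 s (m - (Finsupp.single i 1 + Finsupp.single j 1))) :
    ∃ e ∈ E13, ∃ n, PF13 s n ∧ e + n = m := by
  refine ⟨_, ⟨i, j, hij, rfl⟩, _, h, ?_⟩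
  apply add_tsub_cancel_of_le
  intro k
  have hne := hij.ne
  simp only [Finsupp.coe_add, Pi.add_apply, Finsupp.single_apply]
  split_ifs with h1 h2 h2
  · exact absurd (h1.trans h2.symm) hne
  · subst h1; simpa using hi
  · subst h2; simpa using hj
  · simp

theorem sub_edge13 {s : ℕ} {m : Fin 6 →₀ ℕ} (hm : PF13 (s + 1) m) :
    ∃ e ∈ E13, ∃ n, PF13 s n ∧ e + n = m := by
  rcases edge13 hm with ⟨h1, h2, h⟩ | ⟨h1, h2, h⟩ | ⟨h1, h2, h⟩ | ⟨h1, h2, h⟩ | ⟨h1, h2, h⟩ |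
    ⟨h1, h2, h⟩ | ⟨h1, h2, h⟩ | ⟨h1, h2, h⟩
  · refine sub_edge13_aux 0 1 (by simp [pentagonPlus]) h1 h2 ?_
    simpa [PF13, Finsupp.single_apply] using h
  · refine sub_edge13_aux 0 4 (by simp [pentagonPlus]) h1 h2 ?_
    simpa [PF13, Finsupp.single_apply] using h
  · refine sub_edge13_aux 1 4 (by simp [pentagonPlus]) h1 h2 ?_
    simpa [PF13, Finsupp.single_apply] using h
  · refine sub_edge13_aux 0 2 (by simp [pentagonPlus]) h1 h2 ?_
    simpa [PF13, Finsupp.single_apply] using h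
  · refine sub_edge13_aux 1 3 (by simp [pentagonPlus]) h1 h2 ?_
    simpa [PF13, Finsupp.single_apply] using h
  · refine sub_edge13_aux 2 5 (by simp [pentagonPlus]) h1 h2 ?_
    simpa [PF13, Finsupp.single_apply] using h
  · refine sub_edge13_aux 4 5 (by simp [pentagonPlus]) h1 h2 ?_
    simpa [PF13, Finsupp.single_apply] using h
  · refine sub_edge13_aux 3 5 (by simp [pentagonPlus]) h1 h2 ?_
    simpa [PF13, Finsupp.single_apply] using h

theorem pow13 (K : Type*) [Field K] (s : ℕ) : edgeIdeal K pentagonPlus ^ s =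
    Ideal.span ((fun m => monomial m (1 : K)) '' {m | PF13 s m}) := by
  induction s with
  | zero =>
    rw [pow_zero, Ideal.one_eq_top, eq_comm, Ideal.eq_top_iff_one]
    apply Ideal.subset_span
    exact ⟨0, by simp [PF13, P13], by simp⟩
  | succ s ih =>
    rw [pow_succ', ih, edgeIdeal13, Ideal.span_mul_span']
    congr 1
    ext f
    constructor
    · rintro ⟨_, ⟨e, he, rfl⟩, _, ⟨m, hm, rfl⟩, rfl⟩
      exact ⟨e + m, add_edge13 he hm, by simp [monomial_mul]⟩
    · rintro ⟨m, hm, rfl⟩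
      obtain ⟨e, he, n, hn, rfl⟩ := sub_edge13 hm
      exact ⟨_, ⟨e, he, rfl⟩, _, ⟨n, hn, rfl⟩, by simp [monomial_mul]⟩

theorem enum13 (s : ℕ) : ∃ (r : ℕ) (d : Fin r → (Fin 6 →₀ ℕ)),
    Set.range d = {m | PF13 s m} ∧ ∀ i j, keyF13 s (d i) < keyF13 s (d j) ↔ i < j := by
  classical
  let T := (finite13 s).toFinset.image (keyF13 s)
  have hT : ∀ i : Fin T.card, ∃ m, PF13 s m ∧ keyF13 s m = T.orderEmbOfFin rfl i := by
    intro i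
    obtain ⟨m, hm, hmk⟩ := Finset.mem_image.1 (T.orderEmbOfFin_mem rfl i)
    exact ⟨m, (finite13 s).mem_toFinset.1 hm, hmk⟩
  choose d hd hk using hT
  refine ⟨T.card, d, ?_, fun i j => by rw [hk, hk]; simp⟩
  ext m
  constructor
  · rintro ⟨i, rfl⟩
    exact hd i
  · intro hm
    have : keyF13 s m ∈ Set.range (T.orderEmbOfFin rfl) := by
      rw [Finset.range_orderEmbOfFin]
      simp only [T, Finset.coe_image, Set.Finite.coe_toFinset]
      exact ⟨m, hm, rfl⟩
    obtain ⟨i, hi⟩ := this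
    exact ⟨i, keyF13_inj (hd i) hm ((hk i).trans hi)⟩

/-- for every `s ≥ 2`, `I(G)^s` has linear quotients, where `G` is the
pentagon `a-p-z-q-b-a` together with a vertex `x` adjacent to `a, b, z`. -/
theorem stmt13 {K : Type*} [Field K] (s : ℕ) (hs : 2 ≤ s) :
    HasLinearQuotients ((edgeIdeal K pentagonPlus) ^ s) := by
  obtain ⟨r, d, hr, hlt⟩ := enum13 s
  have hd : ∀ i, PF13 s (d i) := fun i => by
    have : d i ∈ {m | PF13 s m} := hr ▸ Set.mem_range_self i
    exact this
  refine ⟨r, d, ?_, ?_, ?_⟩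
  · intro i j hij hle
    apply hij
    have h1 : d i = d j := by
      obtain ⟨c, hc⟩ := le_iff_exists_add.mp hle
      have h2 := congrArg Finsupp.degree hc
      rw [map_add, PF13_degree (hd i), PF13_degree (hd j)] at h2
      have h3 : c.degree = 0 := by omega
      rw [Finsupp.degree_eq_zero_iff] at h3
      rw [hc, h3, add_zero]
    by_contra hne
    rcases lt_or_gt_of_ne hne with h | h
    · have := (hlt i j).2 h
      rw [h1] at this
      exact lt_irrefl _ this
    · have := (hlt j i).2 h
      rw [h1] at this
      exact lt_irrefl _ this
  · rw [pow13, ← hr, ← Set.range_comp]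
    rfl
  · intro i
    have himg : (fun j => monomial (d j) (1 : K)) '' {j | j < i} =
        (fun m => monomial m (1 : K)) '' (d '' {j | j < i}) := by
      rw [Set.image_image]
    refine ⟨{k | ∃ j < i, d j ≤ d i + Finsupp.single k 1}, ?_⟩
    rw [himg]
    apply le_antisymm
    · intro f hf
      rw [Ideal.mem_colon_span_singleton, mem_ideal_span_monomial_image] at hf
      refine mem_ideal_span_X_image.2 ?_
      intro m hm
      obtain ⟨_, ⟨j, hj, rfl⟩, hle⟩ := hf (m + d i) (by
        rw [mem_support_iff] at hm ⊢
        rw [coeff_mul_monomial, mul_one]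
        exact hm)
      obtain ⟨k, hk, w, hw, hwlt, hwle⟩ := core13 hs (hd j) (hd i) ((hlt j i).2 hj)
      obtain ⟨l, rfl⟩ : w ∈ Set.range d := by rw [hr]; exact hw
      refine ⟨k, ⟨l, (hlt l i).1 hwlt, hwle⟩, ?_⟩
      have := hle k
      simp only [Finsupp.coe_add, Pi.add_apply] at this
      omega
    · rw [Ideal.span_le]
      rintro _ ⟨k, ⟨j, hj, hle⟩, rfl⟩
      rw [SetLike.mem_coe, Ideal.mem_colon_span_singleton, mem_ideal_span_monomial_image]
      intro m hm
      refine ⟨d j, ⟨j, hj, rfl⟩, ?_⟩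
      have h2 : (X k : MvPolynomial (Fin 6) K) * monomial (d i) 1 =
          monomial (d i + Finsupp.single k 1) 1 := by
        simp [X, monomial_mul, add_comm]
      simp only [h2] at hm
      have h3 := Finset.mem_singleton.1 (support_monomial_subset hm)
      rw [h3]
      exact hle
end

section
/- The graph Γ on 7 vertices {a,b,p,q,x,z,z'} with edges ab, ap, ax, bx, bq, xp, xq, pz, qz, pz', qz' is gapfree and contains a cricket, a diamond, a 4-cycle, and a 5-cycle as induced subgraphs (i.e., Γ is a CDCC graph); moreover, no graph on 6 or fewer vertices has all these properties. -/
/-- `G` contains an induced subgraph isomorphic to `H`. -/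
def ContainsInduced {V W : Type*} (G : SimpleGraph V) (H : SimpleGraph W) : Prop :=
  ∃ s : Set V, Nonempty ((G.induce s) ≃g H)

/-- The 4-cycle on `Fin 4`. -/
def cycle4 : SimpleGraph (Fin 4) :=
  SimpleGraph.fromRel (fun i j => j = i + 1)

/-- The cricket: triangle `cde` with two pendant vertices attached to `c`. -/
def cricket : SimpleGraph (Fin 5) :=
  SimpleGraph.fromRel (fun i j =>
    (i = 0 ∧ j = 2) ∨ (i = 1 ∧ j = 2) ∨ (i = 2 ∧ j = 3) ∨ (i = 2 ∧ j = 4) ∨ (i = 3 ∧ j = 4))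

/-- The diamond: `K_4` minus an edge. -/
def diamond : SimpleGraph (Fin 4) :=
  (⊤ : SimpleGraph (Fin 4)).deleteEdges {s(0, 1)}

/-- A CDCC graph: gapfree, containing a cricket, a diamond, `C_4` and `C_5` as induced
subgraphs. -/
def IsCDCC {V : Type*} (G : SimpleGraph V) : Prop :=
  Gapfree G ∧ ContainsInduced G cricket ∧ ContainsInduced G diamond ∧
    ContainsInduced G cycle4 ∧ ContainsInduced G cycle5

/-- The graph `Γ` on 7 vertices (`a=0, b=1, p=2, q=3, x=4, z=5, z'=6`) with edges
`ab, ap, ax, bx, bq, xp, xq, pz, qz, pz', qz'`. -/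
def gamma7 : SimpleGraph (Fin 7) :=
  SimpleGraph.fromRel (fun i j =>
    (i = 0 ∧ j = 1) ∨ (i = 0 ∧ j = 2) ∨ (i = 0 ∧ j = 4) ∨ (i = 1 ∧ j = 4) ∨
    (i = 1 ∧ j = 3) ∨ (i = 4 ∧ j = 2) ∨ (i = 4 ∧ j = 3) ∨ (i = 2 ∧ j = 5) ∨
    (i = 3 ∧ j = 5) ∨ (i = 2 ∧ j = 6) ∨ (i = 3 ∧ j = 6))

theorem cycle5_adj (i j : Fin 5) : cycle5.Adj i j ↔ (i ≠ j ∧ (j = i + 1 ∨ i = j + 1)) := by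
  simp [cycle5]

theorem containsInduced_of {V W : Type*} (G : SimpleGraph V) (H : SimpleGraph W) (f : W → V)
    (hf : Function.Injective f) (h : ∀ i j, G.Adj (f i) (f j) ↔ H.Adj i j) :
    ContainsInduced G H := by
  refine ⟨Set.range f, ⟨SimpleGraph.Iso.symm ⟨Equiv.ofInjective f hf, ?_⟩⟩⟩
  intro a b
  simp [h]

theorem exists_of_containsInduced {V W : Type*} {G : SimpleGraph V} {H : SimpleGraph W}
    (h : ContainsInduced G H) :
    ∃ f : W → V, Function.Injective f ∧ ∀ i j, G.Adj (f i) (f j) ↔ H.Adj i j := by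
  obtain ⟨s, ⟨e⟩⟩ := h
  refine ⟨fun w => (e.symm w : V), ?_, ?_⟩
  · intro a b hab
    exact e.symm.injective (Subtype.ext hab)
  · intro i j
    exact e.symm.map_rel_iff (a := i) (b := j)

theorem c5_deg : ∀ j a b c : Fin 5, a ≠ b → a ≠ c → b ≠ c →
    ¬ (cycle5.Adj j a ∧ cycle5.Adj j b ∧ cycle5.Adj j c) := by
  simp only [cycle5_adj]
  decide +kernel

theorem c5_codeg : ∀ j a b c : Fin 5, a ≠ b → a ≠ c → b ≠ c → j ≠ a → j ≠ b → j ≠ c →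
    ¬ (¬ cycle5.Adj j a ∧ ¬ cycle5.Adj j b ∧ ¬ cycle5.Adj j c) := by
  simp only [cycle5_adj]
  decide +kernel

instance decGamma7 : DecidableRel gamma7.Adj := fun i j =>
  decidable_of_iff (i ≠ j ∧ (_ ∨ _)) (SimpleGraph.fromRel_adj _ i j).symm

theorem gamma7_gap : ∀ a b c d : Fin 7, gamma7.Adj a b → gamma7.Adj c d →
    gamma7.Adj a c ∨ gamma7.Adj a d ∨ gamma7.Adj b c ∨ gamma7.Adj b d := by
  decide +kernel

theorem gamma7_gapfree : Gapfree gamma7 := by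
  intro a b c d hab hcd _
  rcases gamma7_gap a b c d hab hcd with h | h | h | h
  · exact ⟨a, c, h, ⟨a, by simp⟩, ⟨c, by simp⟩⟩
  · exact ⟨a, d, h, ⟨a, by simp⟩, ⟨d, by simp⟩⟩
  · exact ⟨b, c, h, ⟨b, by simp⟩, ⟨c, by simp⟩⟩
  · exact ⟨b, d, h, ⟨b, by simp⟩, ⟨d, by simp⟩⟩

theorem no_small {n : ℕ} (hn : n ≤ 6) (H : SimpleGraph (Fin n))
    (h1 : ContainsInduced H cricket) (h2 : ContainsInduced H cycle5) : False := by
  obtain ⟨g, gi, hg⟩ := exists_of_containsInduced h1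
  obtain ⟨f, fi, hf⟩ := exists_of_containsInduced h2
  -- at most one vertex lies outside the 5-cycle
  have key : ∀ u v : Fin n, u ∉ Set.range f → v ∉ Set.range f → u = v := by
    intro u v hu hv
    by_contra huv
    have hc : (Finset.univ.image f).card = 5 := by
      rw [Finset.card_image_of_injective _ fi]; simp
    have hu' : u ∉ insert v (Finset.univ.image f) := by
      simp only [Set.mem_range, not_exists] at hu
      simp [huv, hu]
    have hv' : v ∉ Finset.univ.image f := by
      simp only [Set.mem_range, not_exists] at hv
      simp [hv]
    have := Finset.card_le_univ (insert u (insert v (Finset.univ.image f)))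
    rw [Finset.card_insert_of_notMem hu', Finset.card_insert_of_notMem hv', hc,
      Fintype.card_fin] at this
    omega
  have hk : ∃ k : Fin 5, ∀ i, i ≠ k → ∃ j, f j = g i := by
    by_cases h : ∃ k, g k ∉ Set.range f
    · obtain ⟨k, hk⟩ := h
      refine ⟨k, fun i hik => ?_⟩
      by_contra hi
      exact hik (gi (key _ _ hi hk))
    · push Not at h
      exact ⟨0, fun i _ => h i⟩
  obtain ⟨k, hk⟩ := hk
  have deg : ∀ a b c : Fin 5, 2 ≠ k → a ≠ k → b ≠ k → c ≠ k → a ≠ b → a ≠ c → b ≠ c →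
      cricket.Adj 2 a → cricket.Adj 2 b → cricket.Adj 2 c → False := by
    intro a b c h2 ha hb hc hab hac hbc aa ab ac
    obtain ⟨j, hj⟩ := hk 2 h2
    obtain ⟨a', ha'⟩ := hk a ha
    obtain ⟨b', hb'⟩ := hk b hb
    obtain ⟨c', hc'⟩ := hk c hc
    refine c5_deg j a' b' c' ?_ ?_ ?_ ⟨?_, ?_, ?_⟩
    · rintro rfl; exact hab (gi (ha'.symm.trans hb'))
    · rintro rfl; exact hac (gi (ha'.symm.trans hc'))
    · rintro rfl; exact hbc (gi (hb'.symm.trans hc'))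
    · rwa [← hf, hj, ha', hg]
    · rwa [← hf, hj, hb', hg]
    · rwa [← hf, hj, hc', hg]
  by_cases h2k : k = 2
  · subst h2k
    obtain ⟨j, hj⟩ := hk 0 (by decide)
    obtain ⟨a', ha'⟩ := hk 1 (by decide)
    obtain ⟨b', hb'⟩ := hk 3 (by decide)
    obtain ⟨c', hc'⟩ := hk 4 (by decide)
    refine c5_codeg j a' b' c' ?_ ?_ ?_ ?_ ?_ ?_ ⟨?_, ?_, ?_⟩
    · rintro rfl; exact absurd (gi (ha'.symm.trans hb')) (by decide)
    · rintro rfl; exact absurd (gi (ha'.symm.trans hc')) (by decide)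
    · rintro rfl; exact absurd (gi (hb'.symm.trans hc')) (by decide)
    · rintro rfl; exact absurd (gi (hj.symm.trans ha')) (by decide)
    · rintro rfl; exact absurd (gi (hj.symm.trans hb')) (by decide)
    · rintro rfl; exact absurd (gi (hj.symm.trans hc')) (by decide)
    · rw [← hf, hj, ha', hg]; simp [cricket]
    · rw [← hf, hj, hb', hg]; simp [cricket]
    · rw [← hf, hj, hc', hg]; simp [cricket]
  · have hadj : ∀ i : Fin 5, i ≠ 2 → cricket.Adj 2 i := by
      simp only [cricket, SimpleGraph.fromRel_adj]
      decide +kernel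
    have hex : ∀ k : Fin 5, k ≠ 2 → ∃ a b c : Fin 5, a ≠ k ∧ b ≠ k ∧ c ≠ k ∧ a ≠ b ∧ a ≠ c ∧
        b ≠ c ∧ a ≠ 2 ∧ b ≠ 2 ∧ c ≠ 2 := by decide +kernel
    obtain ⟨a, b, c, ha, hb, hc, hab, hac, hbc, h1, h2, h3⟩ := hex k h2k
    exact deg a b c (Ne.symm h2k) ha hb hc hab hac hbc (hadj a h1) (hadj b h2) (hadj c h3)

/-- `gamma7` is a CDCC graph, and no graph on 6 or fewer vertices is a
CDCC graph. -/
theorem stmt15 :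
    IsCDCC gamma7 ∧ ∀ n : ℕ, n ≤ 6 → ∀ H : SimpleGraph (Fin n), ¬ IsCDCC H := by
  refine ⟨⟨gamma7_gapfree, ?_, ?_, ?_, ?_⟩, fun n hn H hH => no_small hn H hH.2.1 hH.2.2.2.2⟩
  · refine containsInduced_of _ _ ![5, 6, 2, 0, 4] (by decide +kernel) ?_
    simp only [cricket, SimpleGraph.fromRel_adj]
    decide +kernel
  · refine containsInduced_of _ _ ![1, 2, 0, 4] (by decide +kernel) ?_
    simp only [diamond, SimpleGraph.fromRel_adj, SimpleGraph.deleteEdges_adj,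
      SimpleGraph.top_adj, Set.mem_singleton_iff]
    decide +kernel
  · refine containsInduced_of _ _ ![2, 5, 3, 6] (by decide +kernel) ?_
    simp only [cycle4, SimpleGraph.fromRel_adj]
    decide +kernel
  · refine containsInduced_of _ _ ![0, 1, 3, 5, 2] (by decide +kernel) ?_
    simp only [cycle5, SimpleGraph.fromRel_adj]
    decide +kernel
end
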